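/- Let μ > 0 and let γ₂ be a closed regular curve in S² with unit normal n₂ and geodesic curvature κ₂ satisfying max κ₂ < μ, whose restriction to [a₂,b₂] is a positive shell with image Σ₂ and interior domain Δ. For t ∈ [a₂,b₂] let C_t denote the tangent μ-circle to γ₂ at γ₂(t) on the normal side, with center o_t = (μγ₂(t)+n₂(t))/√(1+μ²). Suppose t₁ ∈ (a₂,b₂) satisfies: C_{t₁} is contained in the closure of Δ, and for every t ∈ (a₂,t₁) the circle C_t is not contained in the closure of Δ. Set t₂ := sup{t ∈ [a₂,b₂] : γ₂(t) ∈ C_{t₁}}, P := γ₂(t₁) and Q := γ₂(t₂). Then the unique θ ∈ [0,2π) such that Q is the image of P under the rotation of ℝ³ through angle θ about the oriented axis o_{t₁} satisfies θ ≥ π. -/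

import Mathlib

noncomputable section

open Matrix

/-- Euclidean 3-space (as triples of reals). -/
abbrev R3 : Type := Fin 3 → ℝ

/-- The Euclidean inner product on ℝ³. -/
def dot3 (a b : R3) : ℝ := a 0 * b 0 + a 1 * b 1 + a 2 * b 2

/-- The Euclidean norm on ℝ³. -/
def norm3 (a : R3) : ℝ := Real.sqrt (dot3 a a)

/-- The cross product on ℝ³. -/
def cross3 (a b : R3) : R3 :=
  ![a 1 * b 2 - a 2 * b 1, a 2 * b 0 - a 0 * b 2, a 0 * b 1 - a 1 * b 0]

/-- The determinant of three vectors in ℝ³. -/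
def det3 (a b c : R3) : ℝ := dot3 a (cross3 b c)

/-- `γ : ℝ → ℝ³` is a regular curve in the unit sphere S²:
it is smooth, takes values in S², and has nowhere-vanishing derivative. -/
structure IsRegularCurve (γ : ℝ → R3) : Prop where
  smooth : ContDiff ℝ (⊤ : ℕ∞) γ
  sphere : ∀ s, dot3 (γ s) (γ s) = 1
  reg : ∀ s, deriv γ s ≠ 0

/-- The geodesic curvature `κ(s) = det(γ, γ', γ'')/|γ'|³` of a curve in S². -/
def kappa (γ : ℝ → R3) (s : ℝ) : ℝ :=
  det3 (γ s) (deriv γ s) (deriv (deriv γ) s) / norm3 (deriv γ s) ^ 3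

/-- The unit normal `n(s) = (γ × γ')/|γ'|` of a curve in S². -/
def unitNormal (γ : ℝ → R3) (s : ℝ) : R3 :=
  (norm3 (deriv γ s))⁻¹ • cross3 (γ s) (deriv γ s)

/-- `γ` is closed of period `l > 0`. -/
def HasPeriod (γ : ℝ → R3) (l : ℝ) : Prop := 0 < l ∧ ∀ s, γ (s + l) = γ s

/-- 2×2 complex matrices. -/
abbrev Mat2 := Matrix (Fin 2) (Fin 2) ℂ

def E1 : Mat2 := !![0, Complex.I; Complex.I, 0]
def E2 : Mat2 := !![0, -1; 1, 0]
def E3 : Mat2 := !![Complex.I, 0; 0, -Complex.I]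

/-- The identification of ℝ³ with su(2) via the orthonormal basis e₁, e₂, e₃. -/
def toSu2 (v : R3) : Mat2 := (v 0 : ℂ) • E1 + (v 1 : ℂ) • E2 + (v 2 : ℂ) • E3

/-- The adjoint action `Ad(a)x = a x a⁻¹`. -/
def AdM (a x : Mat2) : Mat2 := a * x * a⁻¹

/-- `c : ℝ → SU(2)` is a lift of the regular curve `γ` in S²:
it is smooth (entrywise), takes values in SU(2), and satisfies
`Ad(c(s))e₃ = γ(s)` and `Ad(c(s))e₁ = γ'(s)/|γ'(s)|` under `toSu2`. -/
structure IsLift (γ : ℝ → R3) (c : ℝ → Mat2) : Prop where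
  mem : ∀ s, c s ∈ Matrix.specialUnitaryGroup (Fin 2) ℂ
  smooth : ∀ i j, ContDiff ℝ (⊤ : ℕ∞) fun s => c s i j
  ad3 : ∀ s, AdM (c s) E3 = toSu2 (γ s)
  ad1 : ∀ s, AdM (c s) E1 = toSu2 ((norm3 (deriv γ s))⁻¹ • deriv γ s)

/-- The entrywise derivative of a matrix-valued curve. -/
def matDeriv (c : ℝ → Mat2) (s : ℝ) : Mat2 :=
  Matrix.of fun i j => deriv (fun t => c t i j) s

/-- The map `f_{γ₁,γ₂}(s₁,s₂) = c₁(0)⁻¹ c₁(s₁) c₂(s₂)⁻¹ c₂(0)` associated to lifts `c₁, c₂`. -/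
def fmap (c1 c2 : ℝ → Mat2) (s1 s2 : ℝ) : Mat2 :=
  (c1 0)⁻¹ * c1 s1 * (c2 s2)⁻¹ * c2 0

/-- `(γ₁, γ₂)` is an admissible pair. -/
structure IsAdmissiblePair (γ1 γ2 : ℝ → R3) : Prop where
  reg1 : IsRegularCurve γ1
  reg2 : IsRegularCurve γ2
  param1 : ∀ s, norm3 (deriv γ1 s) ^ 2 * (1 + kappa γ1 s ^ 2) = 4
  param2 : ∀ s, norm3 (deriv γ2 s) ^ 2 * (1 + kappa γ2 s ^ 2) = 4
  curv : ∀ s1 s2, kappa γ2 s2 < kappa γ1 s1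

/-- The restriction of `γ` to `[a,b]` is a shell. -/
def IsShell (γ : ℝ → R3) (a b : ℝ) : Prop :=
  a < b ∧ Set.InjOn γ (Set.Ico a b) ∧ γ a = γ b ∧
    LinearIndependent ℝ ![deriv γ a, deriv γ b]

/-- A positive shell: `det(γ(a), γ'(a), γ'(b)) < 0`. -/
def IsPositiveShell (γ : ℝ → R3) (a b : ℝ) : Prop :=
  IsShell γ a b ∧ det3 (γ a) (deriv γ a) (deriv γ b) < 0

/-- A negative shell: `det(γ(a), γ'(a), γ'(b)) > 0`. -/
def IsNegativeShell (γ : ℝ → R3) (a b : ℝ) : Prop :=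
  IsShell γ a b ∧ 0 < det3 (γ a) (deriv γ a) (deriv γ b)

/-- The unit sphere S² in ℝ³. -/
def sphere2 : Set R3 := {x | dot3 x x = 1}

/-- The μ-circle with center `o ∈ S²`. -/
def muCircle (μ : ℝ) (o : R3) : Set R3 :=
  {x | dot3 x x = 1 ∧ dot3 x o = μ / Real.sqrt (1 + μ ^ 2)}

/-- The (open) interior domain of the μ-circle with center `o ∈ S²`. -/
def muDisk (μ : ℝ) (o : R3) : Set R3 :=
  {x | dot3 x x = 1 ∧ μ / Real.sqrt (1 + μ ^ 2) < dot3 x o}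

def normalize3 (v : R3) : R3 := (norm3 v)⁻¹ • v

/-- `Δ` is the interior domain of the shell `γ|_{[a,b]}`: it is a connected component of the
complement of the image of the shell in S², and for each `s ∈ (a,b)` the points obtained by
pushing `γ(s)` slightly in the direction `σ • n(s)` (σ = 1 for a positive shell, σ = -1 for a
negative shell) belong to `Δ`. -/
def IsInteriorDomain (γ : ℝ → R3) (a b σ : ℝ) (Δ : Set R3) : Prop :=
  (∃ p ∈ sphere2 \ γ '' Set.Icc a b,
      Δ = connectedComponentIn (sphere2 \ γ '' Set.Icc a b) p) ∧
    ∀ s ∈ Set.Ioo a b, ∃ ε > 0, ∀ δ ∈ Set.Ioo (0 : ℝ) ε,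
      normalize3 (γ s + (σ * δ) • unitNormal γ s) ∈ Δ

/-- The center `o_t = (μ γ(t) + n(t))/√(1+μ²)` of the tangent μ-circle to `γ` at `γ(t)`
on the normal side. -/
def tangentCenter (μ : ℝ) (γ : ℝ → R3) (t : ℝ) : R3 :=
  (Real.sqrt (1 + μ ^ 2))⁻¹ • (μ • γ t + unitNormal γ t)

/-- The rotation of ℝ³ through angle `θ` about the oriented (unit) axis `o`. -/
def rot3 (o : R3) (θ : ℝ) (x : R3) : R3 :=
  Real.cos θ • x + Real.sin θ • cross3 o x + ((1 - Real.cos θ) * dot3 o x) • o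

/-- A closed regular curve of period `l` is generic: every self-intersection is a
transversal double point. -/
def IsGeneric (γ : ℝ → R3) (l : ℝ) : Prop :=
  ∀ s t : ℝ, γ s = γ t → (¬∃ k : ℤ, s - t = k * l) →
    LinearIndependent ℝ ![deriv γ s, deriv γ t] ∧
      ∀ u : ℝ, γ u = γ s → (∃ k : ℤ, u - s = k * l) ∨ (∃ k : ℤ, u - t = k * l)

/-- The number of crossings (self-intersection points) of a closed curve of period `l`. -/
def crossings (γ : ℝ → R3) (l : ℝ) : ℕ :=
  Set.ncard {p : R3 | ∃ s t : ℝ, γ s = p ∧ γ t = p ∧ ¬∃ k : ℤ, s - t = k * l}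

/-- The spherical (geodesic) distance on S³, identified with SU(2):
`dist(A,B) = arccos(Re trace(A Bᴴ)/2)`, which corresponds to the round distance on the
unit sphere S³ ⊂ ℝ⁴. -/
def distS3 (A B : Mat2) : ℝ := Real.arccos ((Matrix.trace (A * Bᴴ)).re / 2)

/-- The extrinsic diameter of the image of the map `f` associated to the lifts `c₁, c₂`. -/
def extDiam (c1 c2 : ℝ → Mat2) : ℝ :=
  sSup {d : ℝ | ∃ s1 s2 u1 u2 : ℝ, d = distS3 (fmap c1 c2 s1 s2) (fmap c1 c2 u1 u2)}

/-- The parallel curve `γ^θ = (cos θ) γ + (sin θ) n`. -/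
def parallelCurve (γ : ℝ → R3) (θ : ℝ) (s : ℝ) : R3 :=
  Real.cos θ • γ s + Real.sin θ • unitNormal γ s

/-- The arclength-type parameter `s(t) = (1/2)∫₀ᵗ |γ'(u)|√(1+κ(u)²) du`. -/
def arcParam (γ : ℝ → R3) (t : ℝ) : ℝ :=
  (1 / 2) * ∫ u in (0 : ℝ)..t, norm3 (deriv γ u) * Real.sqrt (1 + kappa γ u ^ 2)

/-!
The shell decomposes the sphere, and the side of a point is detected by a winding integral: the
integrand is the logarithmic derivative of the Bargmann invariant of three points of S², and the
integral is locally constant off the curve and changes when the curve is crossed. Hence `Δ` stays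
on the normal side of the shell. If the tangent circle at `γ t₁` lies in `closure Δ`, then, since
`κ < μ`, the whole shell stays outside the open disk of that circle and is tangent to the circle,
with the same orientation, wherever they meet. Minimality of `t₁` forces a contact parameter
`m > t₁` at which `γ m` has non-positive component along `γ' t₁` (otherwise slightly earlier tangent
circles would also lie in `closure Δ`), i.e. `γ m` is the image of `γ t₁` under a rotation through
an angle in `[π, 2π)`. After stereographic projection from the center of the circle, Hopf's secant
argument shows that a simple arc touching the circle from outside visits its contacts in cyclic
order, so the last contact lies at an angle at least as large.
-/

section SecantArgument

open Complex ComplexConjugate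

theorem sub_eq_log_sub_log_of_mul_mem_slitPlane {L : ℝ → ℂ} {p q : ℝ} (hpq : p ≤ q)
    (hL : ContinuousOn L (Set.Icc p q)) {w : ℂ}
    (hw : ∀ t ∈ Set.Icc p q, exp (L t) * w ∈ slitPlane) :
    L q - L p = log (exp (L q) * w) - log (exp (L p) * w) := by
  have hexp : ∀ t ∈ Set.Icc p q, exp (L t - log (exp (L t) * w)) = w⁻¹ := by
    intro t ht
    have hne := slitPlane_ne_zero (hw t ht)
    have hw0 : w ≠ 0 := right_ne_zero_of_mul hne
    rw [exp_sub, exp_log hne]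
    field_simp [exp_ne_zero]
  have hconst : L p - log (exp (L p) * w) = L q - log (exp (L q) * w) :=
    isCoveringMap_exp.constOn_of_comp isPreconnected_Icc
      (hL.sub ((hL.cexp.mul continuousOn_const).clog hw))
      (fun s hs t ht => Subtype.ext ((hexp s hs).trans (hexp t ht).symm))
      (Set.left_mem_Icc.2 hpq) (Set.right_mem_Icc.2 hpq)
  linear_combination -hconst

theorem exp_neg_mul_I_mul_exp (φ : ℝ) : exp (-(φ * I)) * exp (φ * I) = 1 := by
  rw [← exp_add, neg_add_cancel, exp_zero]

theorem one_sub_exp_mul_I (φ : ℝ) :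
    1 - exp (φ * I) =
      ((2 * Real.sin (φ / 2) : ℝ) : ℂ) * exp (((φ / 2 - Real.pi / 2 : ℝ) : ℂ) * I) := by
  obtain ⟨x, rfl⟩ : ∃ x, φ = 2 * x := ⟨φ / 2, by ring⟩
  rw [mul_div_cancel_left₀ x two_ne_zero, exp_mul_I, exp_mul_I, ← ofReal_cos, ← ofReal_sin,
    ← ofReal_cos, ← ofReal_sin, Real.cos_sub_pi_div_two, Real.sin_sub_pi_div_two,
    Real.cos_two_mul, Real.sin_two_mul, Real.cos_sq']
  push_cast
  ring

theorem arg_mul_one_sub_exp_mul_I {r φ : ℝ} (hr : 0 < r) (h0 : 0 < φ) (h2π : φ < 2 * Real.pi) :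
    arg (r * (1 - exp (φ * I))) = (φ - Real.pi) / 2 := by
  have hsin := Real.sin_pos_of_pos_of_lt_pi (x := φ / 2) (by linarith) (by linarith)
  rw [one_sub_exp_mul_I, ← mul_assoc, ← ofReal_mul, exp_mul_I,
    arg_mul_cos_add_sin_mul_I (by positivity) ⟨by linarith, by linarith [Real.pi_pos]⟩]
  ring

theorem arg_mul_neg_I {r : ℝ} (hr : 0 < r) : arg (r * -I) = -(Real.pi / 2) := by
  rw [arg_real_mul _ hr, arg_neg_I]

theorem re_sub_pos_of_norm_le {R : ℝ} {u : ℂ} (h : ‖u‖ ≤ R) (hu : u ≠ R) :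
    0 < ((R : ℂ) - u).re := by
  rw [sub_re, ofReal_re, sub_pos]
  refine lt_of_le_of_ne ((re_le_norm u).trans h) fun hre => hu ?_
  have him : u.im = 0 := abs_re_eq_norm.1
    (le_antisymm (abs_re_le_norm u) (h.trans (hre.ge.trans (le_abs_self _))))
  exact Complex.ext hre him

-- Seen from the boundary point `z p`, the disc lies in a half plane, so a single branch of the
-- argument computes the turning of the secants issued from `z p`.
theorem im_sub_im_of_exp_eq_secant_from {L : ℝ → ℂ} {z : ℝ → ℂ} {p q R α β : ℝ} (hpq : p < q)
    (hR : 0 < R) (hL : ContinuousOn L (Set.Icc p q))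
    (hsec : ∀ t ∈ Set.Ioc p q, ∃ k : ℝ, 0 < k ∧ exp (L t) = k * (z t - z p))
    (htan : ∃ k : ℝ, 0 < k ∧ exp (L p) = k * (I * z p))
    (hz : ∀ t ∈ Set.Icc p q, ‖z t‖ ≤ R)
    (hzp : z p = R * exp (α * I)) (hzq : z q = R * exp (β * I))
    (hαβ : α < β) (hβα : β < α + 2 * Real.pi) :
    (L q).im - (L p).im = (β - α) / 2 := by
  have hα := exp_neg_mul_I_mul_exp α
  have hfrom : ∀ k : ℝ, ∀ t, exp (L t) = k * (z t - z p) →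
      exp (L t) * -exp (-(α * I)) = k * (R - z t * exp (-(α * I))) := by
    intro k t h
    rw [h, hzp]
    linear_combination (k * R : ℂ) * hα
  obtain ⟨k₀, hk₀, htan⟩ := htan
  have hstart : exp (L p) * -exp (-(α * I)) = (k₀ * R : ℝ) * -I := by
    rw [htan, hzp]
    push_cast
    linear_combination (-k₀ * I * R : ℂ) * hα
  obtain ⟨k₁, hk₁, hend⟩ := hsec q ⟨hpq, le_rfl⟩
  replace hend : exp (L q) * -exp (-(α * I)) =
      (k₁ * R : ℝ) * (1 - exp ((β - α : ℝ) * I)) := by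
    rw [hfrom k₁ q hend, hzq, ofReal_sub, sub_mul, sub_eq_add_neg _ (α * I), exp_add]
    push_cast
    ring
  have hslit : ∀ t ∈ Set.Icc p q, exp (L t) * -exp (-(α * I)) ∈ slitPlane := by
    intro t ht
    rcases ht.1.eq_or_lt with rfl | hpt
    · exact Or.inr (by rw [hstart, im_ofReal_mul, neg_im, I_im]; nlinarith)
    · obtain ⟨k, hk, hkt⟩ := hsec t ⟨hpt, ht.2⟩
      have hrot := hfrom k t hkt
      have hne : z t * exp (-(α * I)) ≠ R := by
        intro h
        rw [h, sub_self, mul_zero] at hrot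
        exact mul_ne_zero (exp_ne_zero _) (neg_ne_zero.2 (exp_ne_zero _)) hrot
      refine Or.inl ?_
      rw [hrot, re_ofReal_mul]
      refine mul_pos hk (re_sub_pos_of_norm_le ?_ hne)
      rw [norm_mul, ← neg_mul, ← ofReal_neg, norm_exp_ofReal_mul_I, mul_one]
      exact hz t ht
  have him := congrArg Complex.im (sub_eq_log_sub_log_of_mul_mem_slitPlane hpq.le hL hslit)
  rw [sub_im, sub_im, log_im, log_im, hstart, hend, arg_mul_neg_I (by positivity),
    arg_mul_one_sub_exp_mul_I (by positivity) (by linarith) (by linarith)] at him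
  linarith

-- Reversing time and conjugating exchanges the secants towards `z q` with the secants from it.
theorem im_sub_im_of_exp_eq_secant_to {L : ℝ → ℂ} {z : ℝ → ℂ} {p q R α β : ℝ} (hpq : p < q)
    (hR : 0 < R) (hL : ContinuousOn L (Set.Icc p q))
    (hsec : ∀ s ∈ Set.Ico p q, ∃ k : ℝ, 0 < k ∧ exp (L s) = k * (z q - z s))
    (htan : ∃ k : ℝ, 0 < k ∧ exp (L q) = k * (I * z q))
    (hz : ∀ t ∈ Set.Icc p q, ‖z t‖ ≤ R)
    (hzp : z p = R * exp (α * I)) (hzq : z q = R * exp (β * I))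
    (hαβ : α < β) (hβα : β < α + 2 * Real.pi) :
    (L q).im - (L p).im = (β - α) / 2 := by
  have hrefl : Set.MapsTo (fun t => p + q - t) (Set.Icc p q) (Set.Icc p q) :=
    fun t ht => ⟨by linarith [ht.2], by linarith [ht.1]⟩
  have hexp : ∀ s, exp (conj (L s) + Real.pi * I) = -conj (exp (L s)) := fun s => by
    rw [exp_add, exp_pi_mul_I, mul_neg_one, exp_conj]
  have hpol : ∀ φ : ℝ, conj (R * exp (φ * I)) = R * exp ((-φ : ℝ) * I) := fun φ => by
    rw [map_mul, ← exp_conj, map_mul, conj_I, conj_ofReal, conj_ofReal, mul_neg, ofReal_neg,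
      neg_mul]
  have key := im_sub_im_of_exp_eq_secant_from (z := fun t => conj (z (p + q - t)))
    (L := fun t => conj (L (p + q - t)) + Real.pi * I) (α := -β) (β := -α) hpq hR
    ((continuous_conj.comp_continuousOn (hL.comp (by fun_prop) hrefl)).add continuousOn_const)
    (by
      intro t ht
      obtain ⟨k, hk, hkt⟩ := hsec (p + q - t) ⟨by linarith [ht.2], by linarith [ht.1]⟩
      refine ⟨k, hk, ?_⟩
      rw [hexp, hkt, add_sub_cancel_left, map_mul, map_sub, conj_ofReal]
      ring)
    (by
      obtain ⟨k, hk, hkq⟩ := htan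
      refine ⟨k, hk, ?_⟩
      rw [add_sub_cancel_left, hexp, hkq, map_mul, map_mul, conj_I, conj_ofReal]
      ring)
    (fun t ht => by rw [norm_conj]; exact hz _ (hrefl ht))
    (by rw [add_sub_cancel_left, hzq, hpol])
    (by rw [add_sub_cancel_right, hzp, hpol]) (by linarith) (by linarith)
  simp only [add_sub_cancel_left, add_sub_cancel_right, add_im, conj_im] at key
  linarith

/-- `G` is a positive rescaling of the secant field `(s, t) ↦ z t - z s` of the plane curve `z`
over the triangle `p ≤ s ≤ t ≤ q`, extended to the diagonal without zeros. -/
structure IsSecantField (G : ℝ × ℝ → ℂ) (z : ℝ → ℂ) (p q : ℝ) : Prop where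
  ne_zero : ∀ s t, p ≤ s → s ≤ t → t ≤ q → G (s, t) ≠ 0
  secant : ∀ s t, p ≤ s → s < t → t ≤ q → ∃ k : ℝ, 0 < k ∧ G (s, t) = k * (z t - z s)

theorem IsSecantField.mono {G : ℝ × ℝ → ℂ} {z : ℝ → ℂ} {p q p' q' : ℝ}
    (h : IsSecantField G z p q) (hp : p ≤ p') (hq : q' ≤ q) : IsSecantField G z p' q' where
  ne_zero s t hs hst ht := h.ne_zero s t (hp.trans hs) hst (ht.trans hq)
  secant s t hs hst ht := h.secant s t (hp.trans hs) hst (ht.trans hq)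

theorem IsSecantField.exists_log {G : ℝ × ℝ → ℂ} {z : ℝ → ℂ} {p q : ℝ}
    (h : IsSecantField G z p q) (hpq : p ≤ q) (hG : Continuous G) :
    ∃ L : ℝ × ℝ → ℂ, Continuous L ∧
      ∀ s t, p ≤ s → s ≤ t → t ≤ q → exp (L (s, t)) = G (s, t) := by
  let c : ℝ → ℝ := fun x => max p (min x q)
  have hc : ∀ x, p ≤ x → x ≤ q → c x = x := fun x h1 h2 => by
    simp only [c, min_eq_left h2, max_eq_right h1]
  let r : ℝ × ℝ → ℝ × ℝ := fun x => (min (c x.1) (c x.2), c x.2)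
  have hr : Continuous r := by fun_prop
  have hne : ∀ x, G (r x) ≠ 0 := fun x =>
    h.ne_zero _ _ (le_min (le_max_left _ _) (le_max_left _ _)) (min_le_right _ _)
      (max_le hpq (min_le_right _ _))
  obtain ⟨L, ⟨-, hexp⟩, -⟩ := isCoveringMapOn_exp.existsUnique_continuousMap_lifts
    ⟨G ∘ r, hG.comp hr⟩ (a₀ := (p, p)) (exp_log (hne (p, p))) hne
  refine ⟨L, L.continuous, fun s t hs hst ht => (congrFun hexp (s, t)).trans ?_⟩
  simp only [ContinuousMap.coe_mk, Function.comp_apply, r, hc s hs (hst.trans ht),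
    hc t (hs.trans hst) ht, min_eq_left hst]

-- Hopf: the turning of the secants is that of the secants from `z p` followed by that of the
-- secants to `z q`.
theorem IsSecantField.im_log_sub_im_log {G L : ℝ × ℝ → ℂ} {z : ℝ → ℂ} {p q R α β : ℝ}
    (h : IsSecantField G z p q) (hpq : p < q) (hR : 0 < R) (hL : Continuous L)
    (hLG : ∀ s t, p ≤ s → s ≤ t → t ≤ q → exp (L (s, t)) = G (s, t))
    (hz : ∀ t ∈ Set.Icc p q, ‖z t‖ ≤ R)
    (hp : ∃ k : ℝ, 0 < k ∧ G (p, p) = k * (I * z p))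
    (hq : ∃ k : ℝ, 0 < k ∧ G (q, q) = k * (I * z q))
    (hzp : z p = R * exp (α * I)) (hzq : z q = R * exp (β * I))
    (hαβ : α < β) (hβα : β < α + 2 * Real.pi) :
    (L (q, q)).im - (L (p, p)).im = β - α := by
  have hfrom := im_sub_im_of_exp_eq_secant_from (L := fun t => L (p, t)) hpq hR (by fun_prop)
    (fun t ht => by rw [hLG p t le_rfl ht.1.le ht.2]; exact h.secant p t le_rfl ht.1 ht.2)
    (by rwa [hLG p p le_rfl le_rfl hpq.le]) hz hzp hzq hαβ hβα
  have hto := im_sub_im_of_exp_eq_secant_to (L := fun s => L (s, q)) hpq hR (by fun_prop)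
    (fun s hs => by rw [hLG s q hs.1 hs.2.le le_rfl]; exact h.secant s q hs.1 hs.2 le_rfl)
    (by rwa [hLG q q hpq.le le_rfl le_rfl]) hz hzp hzq hαβ hβα
  linarith

-- With the three contacts out of order, the turnings over `[p, m]`, `[m, q]` and `[p, q]` are
-- `α`, `β + 2π - α` and `β`, which are not additive.
theorem IsSecantField.tangent_cyclic_order {G : ℝ × ℝ → ℂ} {z : ℝ → ℂ} {p m q R α β : ℝ}
    (h : IsSecantField G z p q) (hpm : p < m) (hmq : m < q) (hR : 0 < R) (hG : Continuous G)
    (hz : ∀ t ∈ Set.Icc p q, ‖z t‖ ≤ R)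
    (hp : ∃ k : ℝ, 0 < k ∧ G (p, p) = k * (I * z p))
    (hm : ∃ k : ℝ, 0 < k ∧ G (m, m) = k * (I * z m))
    (hq : ∃ k : ℝ, 0 < k ∧ G (q, q) = k * (I * z q))
    (hzp : z p = R) (hzm : z m = R * exp (α * I)) (hzq : z q = R * exp (β * I))
    (hβ : 0 < β) (hα : α < 2 * Real.pi) : α ≤ β := by
  by_contra! hβα
  obtain ⟨L, hL, hLG⟩ := h.exists_log (hpm.trans hmq).le hG
  have hzp' : z p = R * exp ((0 : ℝ) * I) := by simpa using hzp
  have hzq' : z q = R * exp ((β + 2 * Real.pi : ℝ) * I) := by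
    rw [hzq, ofReal_add, add_mul, exp_add]
    simp
  have hpm' := (h.mono le_rfl hmq.le).im_log_sub_im_log hpm hR hL
    (fun s t hs hst ht => hLG s t hs hst (ht.trans hmq.le))
    (fun t ht => hz t ⟨ht.1, ht.2.trans hmq.le⟩) hp hm hzp' hzm (by linarith) (by linarith)
  have hmq' := (h.mono hpm.le le_rfl).im_log_sub_im_log hmq hR hL
    (fun s t hs hst ht => hLG s t (hpm.le.trans hs) hst ht)
    (fun t ht => hz t ⟨hpm.le.trans ht.1, ht.2⟩) hm hq hzm hzq' (by linarith) (by linarith)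
  have hpq' := h.im_log_sub_im_log (hpm.trans hmq) hR hL hLG hz hp hq hzp' hzq hβ (by linarith)
  linarith [Real.pi_pos]

end SecantArgument

section VectorAlgebra

theorem dot3_eq_dotProduct (x y : R3) : dot3 x y = x ⬝ᵥ y :=
  (vec3_dotProduct x y).symm

theorem cross3_eq_crossProduct (x y : R3) : cross3 x y = x ⨯₃ y :=
  (cross_apply x y).symm

theorem dot3_comm (x y : R3) : dot3 x y = dot3 y x := by
  simp only [dot3_eq_dotProduct, dotProduct_comm]

theorem dot3_add (x y z : R3) : dot3 x (y + z) = dot3 x y + dot3 x z := by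
  simp only [dot3_eq_dotProduct, dotProduct_add]

theorem add_dot3 (x y z : R3) : dot3 (x + y) z = dot3 x z + dot3 y z := by
  simp only [dot3_eq_dotProduct, add_dotProduct]

theorem dot3_sub (x y z : R3) : dot3 x (y - z) = dot3 x y - dot3 x z := by
  simp only [dot3_eq_dotProduct, dotProduct_sub]

theorem sub_dot3 (x y z : R3) : dot3 (x - y) z = dot3 x z - dot3 y z := by
  simp only [dot3_eq_dotProduct, sub_dotProduct]

theorem dot3_smul (c : ℝ) (x y : R3) : dot3 x (c • y) = c * dot3 x y := by
  simp only [dot3_eq_dotProduct, dotProduct_smul, smul_eq_mul]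

theorem smul_dot3 (c : ℝ) (x y : R3) : dot3 (c • x) y = c * dot3 x y := by
  simp only [dot3_eq_dotProduct, smul_dotProduct, smul_eq_mul]

theorem zero_dot3 (x : R3) : dot3 0 x = 0 := by
  simp only [dot3_eq_dotProduct, zero_dotProduct]

theorem cross3_smul (c : ℝ) (x y : R3) : cross3 x (c • y) = c • cross3 x y := by
  simp only [cross3_eq_crossProduct, map_smul]

theorem dot3_cross3_left (x y : R3) : dot3 x (cross3 x y) = 0 := by
  simp only [dot3_eq_dotProduct, cross3_eq_crossProduct, dot_self_cross]

theorem dot3_cross3_right (x y : R3) : dot3 y (cross3 x y) = 0 := by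
  simp only [dot3_eq_dotProduct, cross3_eq_crossProduct, dot_cross_self]

theorem det3_rotate (x y z : R3) : det3 x y z = det3 y z x := by
  simpa only [det3, dot3_eq_dotProduct, cross3_eq_crossProduct] using
    triple_product_permutation x y z

theorem det3_eq_dot3_cross3 (x y z : R3) : det3 x y z = dot3 z (cross3 x y) := by
  rw [det3_rotate, det3_rotate, det3]

theorem det3_swap (x y z : R3) : det3 x y z = -det3 x z y := by
  simp only [det3, dot3, cross3, cons_val]; ring

theorem dot3_cross3_cross3 (x y z w : R3) :
    dot3 (cross3 x y) (cross3 z w) = dot3 x z * dot3 y w - dot3 x w * dot3 y z := by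
  simp only [dot3_eq_dotProduct, cross3_eq_crossProduct, cross_dot_cross]

theorem cross3_cross3 (x y z : R3) :
    cross3 (cross3 x y) z = dot3 x z • y - dot3 y z • x := by
  simp only [dot3_eq_dotProduct, cross3_eq_crossProduct, cross_cross_eq_smul_sub_smul]

theorem det3_mul_det3 (x y z u v w : R3) : det3 x y z * det3 u v w =
    dot3 x u * (dot3 y v * dot3 z w - dot3 y w * dot3 z v)
    - dot3 x v * (dot3 y u * dot3 z w - dot3 y w * dot3 z u)
    + dot3 x w * (dot3 y u * dot3 z v - dot3 y v * dot3 z u) := by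
  simp only [det3, dot3, cross3, cons_val]; ring

theorem det3_cramer (x y z v w : R3) : det3 x y z * dot3 v w =
    det3 v y z * dot3 x w + det3 x v z * dot3 y w + det3 x y v * dot3 z w := by
  simp only [det3, dot3, cross3, cons_val]; ring

theorem dot3_self_nonneg (x : R3) : 0 ≤ dot3 x x := by
  rw [dot3_eq_dotProduct]; exact Finset.sum_nonneg fun i _ => mul_self_nonneg (x i)

theorem dot3_self_eq_zero {x : R3} : dot3 x x = 0 ↔ x = 0 := by
  rw [dot3_eq_dotProduct, dotProduct_self_eq_zero]

theorem dot3_self_pos {x : R3} (hx : x ≠ 0) : 0 < dot3 x x :=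
  (dot3_self_nonneg x).lt_of_ne' (mt dot3_self_eq_zero.1 hx)

theorem norm3_pos {x : R3} (hx : x ≠ 0) : 0 < norm3 x :=
  Real.sqrt_pos.2 (dot3_self_pos hx)

theorem norm3_mul_self (x : R3) : norm3 x * norm3 x = dot3 x x :=
  Real.mul_self_sqrt (dot3_self_nonneg x)

theorem dot3_lt_one {x y : R3} (hx : dot3 x x = 1) (hy : dot3 y y = 1) (h : x ≠ y) :
    dot3 x y < 1 := by
  have hpos := dot3_self_pos (sub_ne_zero.2 h)
  rw [dot3_sub, sub_dot3, sub_dot3, hx, hy, dot3_comm y x] at hpos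
  linarith

theorem abs_dot3_le_one {x y : R3} (hx : dot3 x x = 1) (hy : dot3 y y = 1) : |dot3 x y| ≤ 1 := by
  have hsub := dot3_self_nonneg (x - y)
  have hadd := dot3_self_nonneg (x + y)
  rw [dot3_sub, sub_dot3, sub_dot3, hx, hy, dot3_comm y x] at hsub
  rw [dot3_add, add_dot3, add_dot3, hx, hy, dot3_comm y x] at hadd
  exact abs_le.2 ⟨by linarith, by linarith⟩

/-- A positively oriented orthonormal frame `(u, v, w)` of ℝ³, encoded through `w = u × v`. -/
structure IsOrientedFrame (u v w : R3) : Prop where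
  unit_left : dot3 u u = 1
  unit_right : dot3 v v = 1
  orthogonal : dot3 u v = 0
  cross : cross3 u v = w

namespace IsOrientedFrame

variable {u v w : R3}

theorem of_orthonormal {v w : R3} (hv : dot3 v v = 1) (hw : dot3 w w = 1) (hvw : dot3 v w = 0) :
    IsOrientedFrame (cross3 v w) v w where
  unit_left := by rw [dot3_cross3_cross3, hv, hw, hvw]; ring
  unit_right := hv
  orthogonal := by rw [dot3_comm, dot3_cross3_left]
  cross := by rw [cross3_cross3, hv, dot3_comm, hvw, one_smul, zero_smul, sub_zero]

theorem left_cross (h : IsOrientedFrame u v w) : dot3 u w = 0 := by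
  rw [← h.cross, dot3_cross3_left]

theorem right_cross (h : IsOrientedFrame u v w) : dot3 v w = 0 := by
  rw [← h.cross, dot3_cross3_right]

theorem unit_cross (h : IsOrientedFrame u v w) : dot3 w w = 1 := by
  rw [← h.cross, dot3_cross3_cross3, h.unit_left, h.unit_right, h.orthogonal]; ring

theorem det3_eq_one (h : IsOrientedFrame u v w) : det3 u v w = 1 := by
  rw [det3_eq_dot3_cross3, h.cross, h.unit_cross]

theorem det3_eq (h : IsOrientedFrame u v w) (x y z : R3) : det3 x y z =
    dot3 x u * (dot3 y v * dot3 z w - dot3 y w * dot3 z v)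
    - dot3 x v * (dot3 y u * dot3 z w - dot3 y w * dot3 z u)
    + dot3 x w * (dot3 y u * dot3 z v - dot3 y v * dot3 z u) := by
  rw [← det3_mul_det3, h.det3_eq_one, mul_one]

theorem dot3_eq (h : IsOrientedFrame u v w) (x y : R3) :
    dot3 x y = dot3 x u * dot3 y u + dot3 x v * dot3 y v + dot3 x w * dot3 y w := by
  have hvol : ∀ z, dot3 z w = det3 u v z := fun z => by rw [det3_eq_dot3_cross3, h.cross]
  rw [hvol, hvol, det3_mul_det3, h.unit_left, h.unit_right, h.orthogonal, dot3_comm v u,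
    h.orthogonal, dot3_comm u y, dot3_comm v y]
  ring

theorem ext (h : IsOrientedFrame u v w) {x y : R3} (hu : dot3 x u = dot3 y u)
    (hv : dot3 x v = dot3 y v) (hw : dot3 x w = dot3 y w) : x = y := by
  rw [← sub_eq_zero, ← dot3_self_eq_zero, h.dot3_eq, sub_dot3, sub_dot3, sub_dot3, hu, hv, hw]
  ring

end IsOrientedFrame

end VectorAlgebra

section Calculus

@[fun_prop]
theorem continuous_dot3 {X : Type*} [TopologicalSpace X] {f g : X → R3} (hf : Continuous f)
    (hg : Continuous g) : Continuous fun x => dot3 (f x) (g x) := by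
  unfold dot3; fun_prop

@[fun_prop]
theorem continuous_cross3 {X : Type*} [TopologicalSpace X] {f g : X → R3} (hf : Continuous f)
    (hg : Continuous g) : Continuous fun x => cross3 (f x) (g x) := by
  refine continuous_pi fun i => ?_
  fin_cases i <;> simp only [cross3, Fin.isValue, Fin.zero_eta, Fin.mk_one,
    Fin.reduceFinMk, cons_val_zero, cons_val_one, cons_val] <;> fun_prop

@[fun_prop]
theorem continuous_det3 {X : Type*} [TopologicalSpace X] {f g k : X → R3} (hf : Continuous f)
    (hg : Continuous g) (hk : Continuous k) : Continuous fun x => det3 (f x) (g x) (k x) := by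
  unfold det3; fun_prop

theorem contDiff_dot3 {n : WithTop ℕ∞} {f g : ℝ → R3} (hf : ContDiff ℝ n f)
    (hg : ContDiff ℝ n g) : ContDiff ℝ n fun x => dot3 (f x) (g x) := by
  unfold dot3; fun_prop

theorem contDiff_cross3 {n : WithTop ℕ∞} {f g : ℝ → R3} (hf : ContDiff ℝ n f)
    (hg : ContDiff ℝ n g) : ContDiff ℝ n fun x => cross3 (f x) (g x) := by
  refine contDiff_pi.2 fun i => ?_
  fin_cases i <;> simp only [cross3, Fin.isValue, Fin.zero_eta, Fin.mk_one,
    Fin.reduceFinMk, cons_val_zero, cons_val_one, cons_val] <;> fun_prop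

theorem hasDerivAt_dot3 {f g : ℝ → R3} {f' g' : R3} {u : ℝ} (hf : HasDerivAt f f' u)
    (hg : HasDerivAt g g' u) :
    HasDerivAt (fun x => dot3 (f x) (g x)) (dot3 f' (g u) + dot3 (f u) g') u := by
  have hf := hasDerivAt_pi.1 hf
  have hg := hasDerivAt_pi.1 hg
  unfold dot3
  convert! (((hf 0).mul (hg 0)).add ((hf 1).mul (hg 1))).add ((hf 2).mul (hg 2)) using 1
  ring

theorem hasDerivAt_const_dot3 {f : ℝ → R3} {f' : R3} {u : ℝ} (hf : HasDerivAt f f' u) (x : R3) :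
    HasDerivAt (fun u => dot3 x (f u)) (dot3 x f') u := by
  simpa [dot3] using hasDerivAt_dot3 (hasDerivAt_const u x) hf

theorem dot3_eq_neg_of_dot3_const {f g : ℝ → R3} {f' g' : R3} {u c : ℝ} (hf : HasDerivAt f f' u)
    (hg : HasDerivAt g g' u) (hc : ∀ s, dot3 (f s) (g s) = c) :
    dot3 f' (g u) = -dot3 (f u) g' := by
  have hderiv := hasDerivAt_dot3 hf hg
  rw [funext hc] at hderiv
  exact eq_neg_of_add_eq_zero_left (hderiv.unique (hasDerivAt_const u c))

end Calculus

/-- The unit tangent vector `γ'/|γ'|` of a curve. -/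
def unitTangent (γ : ℝ → R3) (s : ℝ) : R3 := (norm3 (deriv γ s))⁻¹ • deriv γ s

theorem unitNormal_eq_cross3 (γ : ℝ → R3) (s : ℝ) :
    unitNormal γ s = cross3 (γ s) (unitTangent γ s) := by
  rw [unitTangent, cross3_smul, unitNormal]

namespace IsRegularCurve

variable {γ : ℝ → R3}

theorem hasDerivAt (h : IsRegularCurve γ) (s : ℝ) : HasDerivAt γ (deriv γ s) s :=
  (h.smooth.differentiable (by simp) s).hasDerivAt

theorem contDiff_deriv (h : IsRegularCurve γ) : ContDiff ℝ (⊤ : ℕ∞) (deriv γ) :=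
  (contDiff_infty_iff_deriv.1 (by exact h.smooth)).2

theorem hasDerivAt_deriv (h : IsRegularCurve γ) (s : ℝ) :
    HasDerivAt (deriv γ) (deriv (deriv γ) s) s :=
  (h.contDiff_deriv.differentiable (by simp) s).hasDerivAt

theorem speed_pos (h : IsRegularCurve γ) (s : ℝ) : 0 < norm3 (deriv γ s) := norm3_pos (h.reg s)

theorem contDiff_speed (h : IsRegularCurve γ) :
    ContDiff ℝ (⊤ : ℕ∞) fun s => norm3 (deriv γ s) :=
  ContDiff.sqrt (contDiff_dot3 h.contDiff_deriv h.contDiff_deriv)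
    fun s => (dot3_self_pos (h.reg s)).ne'

theorem contDiff_unitTangent (h : IsRegularCurve γ) : ContDiff ℝ (⊤ : ℕ∞) (unitTangent γ) :=
  (h.contDiff_speed.inv fun s => (h.speed_pos s).ne').smul h.contDiff_deriv

theorem contDiff_unitNormal (h : IsRegularCurve γ) : ContDiff ℝ (⊤ : ℕ∞) (unitNormal γ) := by
  rw [funext (unitNormal_eq_cross3 γ)]
  exact contDiff_cross3 h.smooth h.contDiff_unitTangent

theorem deriv_eq_smul_unitTangent (h : IsRegularCurve γ) (s : ℝ) :
    deriv γ s = norm3 (deriv γ s) • unitTangent γ s := by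
  rw [unitTangent, smul_smul, mul_inv_cancel₀ (h.speed_pos s).ne', one_smul]

theorem dot3_deriv (h : IsRegularCurve γ) (s : ℝ) : dot3 (γ s) (deriv γ s) = 0 := by
  have hconst := dot3_eq_neg_of_dot3_const (h.hasDerivAt s) (h.hasDerivAt s) h.sphere
  rw [dot3_comm] at hconst
  linarith

theorem frame (h : IsRegularCurve γ) (s : ℝ) :
    IsOrientedFrame (γ s) (unitTangent γ s) (unitNormal γ s) where
  unit_left := h.sphere s
  unit_right := by
    rw [unitTangent, dot3_smul, smul_dot3, ← norm3_mul_self]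
    have := (h.speed_pos s).ne'
    field_simp
  orthogonal := by rw [unitTangent, dot3_smul, h.dot3_deriv, mul_zero]
  cross := (unitNormal_eq_cross3 γ s).symm

theorem deriv_dot3_unitTangent (h : IsRegularCurve γ) (s : ℝ) :
    dot3 (deriv γ s) (unitTangent γ s) = norm3 (deriv γ s) := by
  nth_rw 1 [h.deriv_eq_smul_unitTangent]
  rw [smul_dot3, (h.frame s).unit_right, mul_one]

theorem deriv_dot3_unitNormal (h : IsRegularCurve γ) (s : ℝ) :
    dot3 (deriv γ s) (unitNormal γ s) = 0 := by
  rw [h.deriv_eq_smul_unitTangent, smul_dot3, (h.frame s).right_cross, mul_zero]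

theorem deriv_deriv_dot3_self (h : IsRegularCurve γ) (s : ℝ) :
    dot3 (deriv (deriv γ) s) (γ s) = -norm3 (deriv γ s) ^ 2 := by
  rw [pow_two, norm3_mul_self, dot3_eq_neg_of_dot3_const (h.hasDerivAt_deriv s) (h.hasDerivAt s)
    fun u => (dot3_comm _ _).trans (h.dot3_deriv u)]

theorem det3_deriv (h : IsRegularCurve γ) (s : ℝ) (x : R3) :
    det3 (γ s) (deriv γ s) x = norm3 (deriv γ s) * dot3 x (unitNormal γ s) := by
  rw [unitNormal, dot3_smul, mul_inv_cancel_left₀ (h.speed_pos s).ne', det3_eq_dot3_cross3]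

theorem deriv_deriv_dot3_unitNormal (h : IsRegularCurve γ) (s : ℝ) :
    dot3 (deriv (deriv γ) s) (unitNormal γ s) = kappa γ s * norm3 (deriv γ s) ^ 2 := by
  have := (h.speed_pos s).ne'
  rw [kappa, h.det3_deriv]
  field_simp

theorem hasDerivAt_unitNormal (h : IsRegularCurve γ) (s : ℝ) :
    HasDerivAt (unitNormal γ) (-kappa γ s • deriv γ s) s := by
  have hn : HasDerivAt (unitNormal γ) (deriv (unitNormal γ) s) s :=
    (h.contDiff_unitNormal.differentiable (by simp) s).hasDerivAt
  convert hn using 1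
  have hunit := dot3_eq_neg_of_dot3_const hn hn fun u => (h.frame u).unit_cross
  have hpoint := dot3_eq_neg_of_dot3_const (h.hasDerivAt s) hn fun u => (h.frame u).left_cross
  have htangent := dot3_eq_neg_of_dot3_const (h.hasDerivAt_deriv s) hn h.deriv_dot3_unitNormal
  rw [h.deriv_dot3_unitNormal] at hpoint
  rw [h.deriv_deriv_dot3_unitNormal, h.deriv_eq_smul_unitTangent, smul_dot3,
    ← h.deriv_eq_smul_unitTangent] at htangent
  refine (h.frame s).ext ?_ ?_ ?_
  · rw [smul_dot3, dot3_comm _ (γ s), h.dot3_deriv, dot3_comm _ (γ s)]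
    linarith
  · rw [smul_dot3, h.deriv_dot3_unitTangent, dot3_comm (deriv _ _)]
    exact mul_left_cancel₀ (h.speed_pos s).ne' (by linarith)
  · rw [smul_dot3, h.deriv_dot3_unitNormal]
    rw [dot3_comm (unitNormal γ s)] at hunit
    linarith

theorem hasDerivAt_tangentCenter (h : IsRegularCurve γ) (μ s : ℝ) :
    HasDerivAt (tangentCenter μ γ)
      (((Real.sqrt (1 + μ ^ 2))⁻¹ * (μ - kappa γ s)) • deriv γ s) s := by
  convert! (((h.hasDerivAt s).const_smul μ).add (h.hasDerivAt_unitNormal s)).const_smul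
    (Real.sqrt (1 + μ ^ 2))⁻¹ using 1
  rw [← add_smul, smul_smul, sub_eq_add_neg]

theorem continuous_tangentCenter (h : IsRegularCurve γ) (μ : ℝ) :
    Continuous (tangentCenter μ γ) :=
  continuous_iff_continuousAt.2 fun s => (h.hasDerivAt_tangentCenter μ s).continuousAt

theorem dot3_tangentCenter (h : IsRegularCurve γ) (μ s : ℝ) :
    dot3 (γ s) (tangentCenter μ γ s) = μ / Real.sqrt (1 + μ ^ 2) := by
  rw [tangentCenter, dot3_smul, dot3_add, dot3_smul, h.sphere, (h.frame s).left_cross]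
  ring

theorem unitTangent_dot3_tangentCenter (h : IsRegularCurve γ) (μ s : ℝ) :
    dot3 (unitTangent γ s) (tangentCenter μ γ s) = 0 := by
  rw [tangentCenter, dot3_smul, dot3_add, dot3_smul, (h.frame s).right_cross, dot3_comm,
    (h.frame s).orthogonal]
  ring

theorem unitNormal_dot3_tangentCenter (h : IsRegularCurve γ) (μ s : ℝ) :
    dot3 (unitNormal γ s) (tangentCenter μ γ s) = (Real.sqrt (1 + μ ^ 2))⁻¹ := by
  rw [tangentCenter, dot3_smul, dot3_add, dot3_smul, (h.frame s).unit_cross, dot3_comm,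
    (h.frame s).left_cross]
  ring

theorem tangentCenter_unit (h : IsRegularCurve γ) (μ s : ℝ) :
    dot3 (tangentCenter μ γ s) (tangentCenter μ γ s) = 1 := by
  have hsq : Real.sqrt (1 + μ ^ 2) ^ 2 = 1 + μ ^ 2 := Real.sq_sqrt (by positivity)
  rw [(h.frame s).dot3_eq, dot3_comm _ (γ s), dot3_comm _ (unitTangent γ s),
    dot3_comm _ (unitNormal γ s), h.dot3_tangentCenter, h.unitTangent_dot3_tangentCenter,
    h.unitNormal_dot3_tangentCenter]
  have : 0 < 1 + μ ^ 2 := by positivity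
  field_simp
  rw [hsq]; ring

end IsRegularCurve

section Index

open Filter Topology

/-- The winding form of the unit sphere around `x`, evaluated along a curve. -/
def windingDensity (γ : ℝ → R3) (x : R3) (u : ℝ) : ℝ :=
  det3 x (γ u) (deriv γ u) / (1 - dot3 x (γ u))

/-- The spherical winding integral of an arc around `x`, the analogue of `2π` times a winding
number; for a closed arc it is locally constant in `x` off the arc. -/
def windingIntegral (γ : ℝ → R3) (a b : ℝ) (x : R3) : ℝ :=
  ∫ u in a..b, windingDensity γ x u

/-- Four times the Bargmann invariant (trace of the product of the spin projections) of the points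
`-x`, `g`, `-y` of the sphere. Its argument is half the area of their geodesic triangle, and as a
function of `g` a primitive of half the difference of the winding forms around `x` and `y`. -/
def bargmann (x y g : R3) : ℂ := ⟨1 - dot3 x g - dot3 y g + dot3 x y, det3 x g y⟩

theorem bargmann_normSq {x y g : R3} (hx : dot3 x x = 1) (hy : dot3 y y = 1) (hg : dot3 g g = 1) :
    Complex.normSq (bargmann x y g) =
      2 * (1 - dot3 x g) * (1 - dot3 y g) * (1 + dot3 x y) := by
  rw [Complex.normSq_apply, bargmann, det3_mul_det3, hx, hy, hg, dot3_comm g x, dot3_comm g y,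
    dot3_comm y x]
  ring

theorem bargmann_deriv_identity {x y g v : R3} (hx : dot3 x x = 1) (hy : dot3 y y = 1)
    (hg : dot3 g g = 1) (hgv : dot3 g v = 0) :
    (bargmann x y g).re * det3 x v y + (bargmann x y g).im * (dot3 x v + dot3 y v) =
      (1 + dot3 x y) * (det3 x g v * (1 - dot3 y g) - det3 y g v * (1 - dot3 x g)) := by
  have cramer_x := det3_cramer x g y v x
  have cramer_y := det3_cramer x g y v y
  have cramer_g := det3_cramer x g y v g
  have hswap : det3 v g y = -det3 y g v := by
    rw [det3_rotate, det3_swap, ← det3_rotate]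
  rw [dot3_comm v, hx, dot3_comm g, dot3_comm y, hswap] at cramer_x
  rw [dot3_comm v, hy, dot3_comm g, hswap] at cramer_y
  rw [dot3_comm v, hgv, hg, hswap] at cramer_g
  simp only [bargmann]
  linear_combination cramer_x + cramer_y - (1 + dot3 x y) * cramer_g

variable {γ : ℝ → R3} {a b : ℝ}

theorem hasDerivAt_im {f : ℝ → ℂ} {f' : ℂ} {u : ℝ} (hf : HasDerivAt f f' u) :
    HasDerivAt (fun u => (f u).im) f'.im u :=
  Complex.imCLM.hasFDerivAt.comp_hasDerivAt u hf

theorem hasDerivAt_bargmann {g : ℝ → R3} {g' : R3} {u : ℝ} (hg : HasDerivAt g g' u) (x y : R3) :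
    HasDerivAt (fun u => bargmann x y (g u))
      ⟨-dot3 x g' - dot3 y g', det3 x g' y⟩ u := by
  have hre : HasDerivAt (fun u => 1 - dot3 x (g u) - dot3 y (g u) + dot3 x y)
      (-dot3 x g' - dot3 y g') u :=
    (((hasDerivAt_const_dot3 hg x).const_sub 1).sub (hasDerivAt_const_dot3 hg y)).add_const _
  have him : HasDerivAt (fun u => det3 x (g u) y) (det3 x g' y) u := by
    simp only [← det3_rotate y, det3_eq_dot3_cross3 y, dot3_comm _ (cross3 y x)]
    exact hasDerivAt_const_dot3 hg _
  simpa only [bargmann, Complex.mk_eq_add_mul_I] using!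
    hre.ofReal_comp.add (him.ofReal_comp.mul_const Complex.I)

theorem bargmann_ne_zero {x y g : R3} (hx : dot3 x x = 1) (hy : dot3 y y = 1) (hg : dot3 g g = 1)
    (hne : bargmann x y g ≠ 0) : dot3 x g < 1 ∧ dot3 y g < 1 ∧ 0 < 1 + dot3 x y := by
  rw [← Complex.normSq_pos, bargmann_normSq hx hy hg] at hne
  have hxg : 0 ≤ 1 - dot3 x g := sub_nonneg.2 (le_of_abs_le (abs_dot3_le_one hx hg))
  have hyg : 0 ≤ 1 - dot3 y g := sub_nonneg.2 (le_of_abs_le (abs_dot3_le_one hy hg))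
  have hxy : 0 ≤ 1 + dot3 x y := by linarith [neg_le_of_abs_le (abs_dot3_le_one hx hy)]
  refine ⟨sub_pos.1 (hxg.lt_of_ne' ?_), sub_pos.1 (hyg.lt_of_ne' ?_), hxy.lt_of_ne' ?_⟩ <;>
    intro hzero <;> simp [hzero] at hne

theorem IsRegularCurve.hasDerivAt_arg_bargmann (h : IsRegularCurve γ) {x y : R3} {u : ℝ}
    (hx : dot3 x x = 1) (hy : dot3 y y = 1) (hs : bargmann x y (γ u) ∈ Complex.slitPlane) :
    HasDerivAt (fun u => (bargmann x y (γ u)).arg)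
      (1 / 2 * (windingDensity γ x u - windingDensity γ y u)) u := by
  obtain ⟨hxu, hyu, hxy⟩ := bargmann_ne_zero hx hy (h.sphere u) (Complex.slitPlane_ne_zero hs)
  have hlog := hasDerivAt_im ((hasDerivAt_bargmann (h.hasDerivAt u) x y).clog_real hs)
  simp only [Complex.log_im] at hlog
  convert hlog using 1
  have hderiv := bargmann_deriv_identity hx hy (h.sphere u) (h.dot3_deriv u)
  rw [Complex.div_im, bargmann_normSq hx hy (h.sphere u), windingDensity, windingDensity]
  have hxne : 1 - dot3 x (γ u) ≠ 0 := by linarith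
  have hyne : 1 - dot3 y (γ u) ≠ 0 := by linarith
  field_simp
  linear_combination -hderiv

theorem IsRegularCurve.intervalIntegrable_windingDensity (h : IsRegularCurve γ) (hab : a ≤ b)
    {x : R3} (hx : ∀ u ∈ Set.Icc a b, dot3 x (γ u) < 1) :
    IntervalIntegrable (windingDensity γ x) MeasureTheory.volume a b := by
  have hγ := h.smooth.continuous
  have hγ' := h.contDiff_deriv.continuous
  refine ContinuousOn.intervalIntegrable_of_Icc hab ?_
  exact ContinuousOn.div (by fun_prop) (by fun_prop) fun u hu => by linarith [hx u hu]

theorem IsRegularCurve.windingIntegral_sub_eq_of_tendsto (h : IsRegularCurve γ) (hab : a < b)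
    {x y : R3} (hx : dot3 x x = 1) (hy : dot3 y y = 1)
    (hne : ∀ u ∈ Set.Icc a b, bargmann x y (γ u) ≠ 0)
    (hslit : ∀ u ∈ Set.Ioo a b, bargmann x y (γ u) ∈ Complex.slitPlane) {α β : ℝ}
    (hα : Tendsto (fun u => (bargmann x y (γ u)).arg) (𝓝[>] a) (𝓝 α))
    (hβ : Tendsto (fun u => (bargmann x y (γ u)).arg) (𝓝[<] b) (𝓝 β)) :
    windingIntegral γ a b x - windingIntegral γ a b y = 2 * (β - α) := by
  have hoff := fun u hu => bargmann_ne_zero hx hy (h.sphere u) (hne u hu)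
  have hintx := h.intervalIntegrable_windingDensity hab.le fun u hu => (hoff u hu).1
  have hinty := h.intervalIntegrable_windingDensity hab.le fun u hu => (hoff u hu).2.1
  have hftc := intervalIntegral.integral_eq_sub_of_hasDerivAt_of_tendsto hab
    (fun u hu => h.hasDerivAt_arg_bargmann hx hy (hslit u hu)) ((hintx.sub hinty).const_mul _) hα hβ
  rw [intervalIntegral.integral_const_mul, intervalIntegral.integral_sub hintx hinty] at hftc
  rw [windingIntegral, windingIntegral]
  linarith

theorem IsRegularCurve.windingIntegral_eq (h : IsRegularCurve γ) (hab : a < b)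
    (hclosed : γ a = γ b) {x y : R3} (hx : dot3 x x = 1) (hy : dot3 y y = 1)
    (hslit : ∀ u ∈ Set.Icc a b, bargmann x y (γ u) ∈ Complex.slitPlane) :
    windingIntegral γ a b x = windingIntegral γ a b y := by
  have hcont := fun u hu => (h.hasDerivAt_arg_bargmann hx hy (hslit u hu)).continuousAt.tendsto
  have hsub := h.windingIntegral_sub_eq_of_tendsto hab hx hy
    (fun u hu => Complex.slitPlane_ne_zero (hslit u hu))
    (fun u hu => hslit u (Set.Ioo_subset_Icc_self hu))
    ((hcont a ⟨le_rfl, hab.le⟩).mono_left nhdsWithin_le_nhds)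
    ((hcont b ⟨hab.le, le_rfl⟩).mono_left nhdsWithin_le_nhds)
  rwa [hclosed, sub_self, mul_zero, sub_eq_zero] at hsub

theorem IsRegularCurve.windingIntegral_eventually_eq (h : IsRegularCurve γ) (hab : a < b)
    (hclosed : γ a = γ b) {y : R3} (hy : y ∈ sphere2 \ γ '' Set.Icc a b) :
    ∀ᶠ x in 𝓝[sphere2] y, windingIntegral γ a b x = windingIntegral γ a b y := by
  have hγ := h.smooth.continuous
  have hyy : dot3 y y = 1 := hy.1
  have hnear : ∀ᶠ x in 𝓝 y, ∀ u ∈ Set.Icc a b,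
      0 < 1 - dot3 x (γ u) - dot3 y (γ u) + dot3 x y := by
    refine isCompact_Icc.eventually_forall_of_forall_eventually fun u hu => ?_
    have hlt : dot3 y (γ u) < 1 := dot3_lt_one hyy (h.sphere u) fun heq => hy.2 ⟨u, hu, heq.symm⟩
    refine ContinuousAt.eventually_lt (g := fun z : R3 × ℝ =>
      1 - dot3 z.1 (γ z.2) - dot3 y (γ z.2) + dot3 z.1 y) continuousAt_const (by fun_prop) ?_
    linarith
  filter_upwards [hnear.filter_mono nhdsWithin_le_nhds, self_mem_nhdsWithin] with x hxnear hx
  exact h.windingIntegral_eq hab hclosed hx hyy fun u hu => Or.inl (hxnear u hu)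

theorem IsRegularCurve.windingIntegral_eq_of_isPreconnected (h : IsRegularCurve γ) (hab : a < b)
    (hclosed : γ a = γ b) {S : Set R3} (hS : IsPreconnected S)
    (hsub : S ⊆ sphere2 \ γ '' Set.Icc a b) {x y : R3} (hx : x ∈ S) (hy : y ∈ S) :
    windingIntegral γ a b x = windingIntegral γ a b y := by
  refine hS.induction₂ (fun x y => windingIntegral γ a b x = windingIntegral γ a b y)
    (fun x hx => ?_) (fun _ _ _ _ _ _ => .trans) (fun _ _ _ _ => .symm) hx hy
  exact ((h.windingIntegral_eventually_eq hab hclosed (hsub hx)).filter_mono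
    (nhdsWithin_mono _ fun z hz => (hsub hz).1)).mono fun _ => .symm

theorem IsRegularCurve.windingIntegral_eq_of_mem_closure (h : IsRegularCurve γ) (hab : a < b)
    (hclosed : γ a = γ b) {S : Set R3} (hS : IsPreconnected S)
    (hsub : S ⊆ sphere2 \ γ '' Set.Icc a b) {x y : R3} (hx : x ∈ closure S)
    (hx' : x ∈ sphere2 \ γ '' Set.Icc a b) (hy : y ∈ S) :
    windingIntegral γ a b x = windingIntegral γ a b y := by
  have hnear := (h.windingIntegral_eventually_eq hab hclosed hx').filter_mono
    (nhdsWithin_mono _ fun z hz => (hsub hz).1 : 𝓝[S] x ≤ _)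
  have : (𝓝[S] x).NeBot := mem_closure_iff_nhdsWithin_neBot.1 hx
  obtain ⟨z, hz, hzS⟩ := (hnear.and self_mem_nhdsWithin).exists
  rw [← hz]
  exact h.windingIntegral_eq_of_isPreconnected hab hclosed hS hsub hzS hy

end Index

section Jump

open Filter Topology

/-- The point `(γ u + δ n(u))/√(1+δ²)` of the sphere obtained by pushing `γ u` in the normal
direction. -/
def pushOff (γ : ℝ → R3) (u δ : ℝ) : R3 :=
  (Real.sqrt (1 + δ ^ 2))⁻¹ • (γ u + δ • unitNormal γ u)

variable {γ : ℝ → R3} {a b : ℝ}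

theorem dot3_pushOff (γ : ℝ → R3) (x : R3) (u δ : ℝ) : dot3 x (pushOff γ u δ) =
    (Real.sqrt (1 + δ ^ 2))⁻¹ * (dot3 x (γ u) + δ * dot3 x (unitNormal γ u)) := by
  rw [pushOff, dot3_smul, dot3_add, dot3_smul]

theorem IsShell.ne_of_mem_Ioo (hsh : IsShell γ a b) {s u : ℝ} (hs : s ∈ Set.Ioo a b)
    (hu : u ∈ Set.Icc a b) (hus : u ≠ s) : γ u ≠ γ s := by
  obtain ⟨hab, hinj, hclosed, -⟩ := hsh
  have hs' : s ∈ Set.Ico a b := ⟨hs.1.le, hs.2⟩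
  rcases hu.2.eq_or_lt with rfl | hub
  · exact fun heq => hs.1.ne (hinj ⟨le_rfl, hab⟩ hs' (hclosed.trans heq))
  · exact fun heq => hus (hinj ⟨hu.1, hub⟩ hs' heq)

namespace IsRegularCurve

theorem pushOff_dot3_self (h : IsRegularCurve γ) (u δ : ℝ) :
    dot3 (pushOff γ u δ) (γ u) = (Real.sqrt (1 + δ ^ 2))⁻¹ := by
  rw [dot3_comm, dot3_pushOff, (h.frame u).left_cross, h.sphere]; ring

theorem pushOff_dot3_unitTangent (h : IsRegularCurve γ) (u δ : ℝ) :
    dot3 (pushOff γ u δ) (unitTangent γ u) = 0 := by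
  rw [dot3_comm, dot3_pushOff, (h.frame u).right_cross, dot3_comm, (h.frame u).orthogonal]; ring

theorem pushOff_dot3_unitNormal (h : IsRegularCurve γ) (u δ : ℝ) :
    dot3 (pushOff γ u δ) (unitNormal γ u) = (Real.sqrt (1 + δ ^ 2))⁻¹ * δ := by
  rw [dot3_comm, dot3_pushOff, (h.frame u).unit_cross, dot3_comm, (h.frame u).left_cross]; ring

theorem pushOff_unit (h : IsRegularCurve γ) (u δ : ℝ) :
    dot3 (pushOff γ u δ) (pushOff γ u δ) = 1 := by
  have hr : Real.sqrt (1 + δ ^ 2) ^ 2 = 1 + δ ^ 2 := Real.sq_sqrt (by positivity)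
  rw [(h.frame u).dot3_eq, h.pushOff_dot3_self, h.pushOff_dot3_unitTangent,
    h.pushOff_dot3_unitNormal]
  field_simp
  linarith

theorem normalize3_eq_pushOff (h : IsRegularCurve γ) (u δ : ℝ) :
    normalize3 (γ u + δ • unitNormal γ u) = pushOff γ u δ := by
  rw [normalize3, norm3, pushOff, (h.frame u).dot3_eq]
  simp only [add_dot3, smul_dot3, h.sphere, (h.frame u).orthogonal, (h.frame u).left_cross,
    (h.frame u).unit_cross, dot3_comm (unitNormal γ u), (h.frame u).right_cross]
  ring_nf

theorem continuous_pushOff (h : IsRegularCurve γ) :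
    Continuous fun z : ℝ × ℝ => pushOff γ z.1 z.2 := by
  have hγ := h.smooth.continuous
  have hn := h.contDiff_unitNormal.continuous
  have hr : Continuous fun z : ℝ × ℝ => Real.sqrt (1 + z.2 ^ 2) := by fun_prop
  exact (hr.inv₀ fun z => (by positivity : 0 < Real.sqrt (1 + z.2 ^ 2)).ne').smul (by fun_prop)

theorem bargmann_pushOff (h : IsRegularCurve γ) (s δ : ℝ) (g : R3) :
    bargmann (pushOff γ s δ) (pushOff γ s (-δ)) g =
      ⟨2 / (1 + δ ^ 2) * (1 - Real.sqrt (1 + δ ^ 2) * dot3 g (γ s)),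
        -(2 * δ / (1 + δ ^ 2)) * dot3 g (unitTangent γ s)⟩ := by
  have hr : Real.sqrt (1 + δ ^ 2) ^ 2 = 1 + δ ^ 2 := Real.sq_sqrt (by positivity)
  have hr0 : 0 < Real.sqrt (1 + δ ^ 2) := by positivity
  rw [bargmann, dot3_pushOff γ (pushOff γ s δ), h.pushOff_dot3_self, h.pushOff_dot3_unitNormal,
    dot3_comm, dot3_pushOff, dot3_comm (pushOff _ _ _), dot3_pushOff, (h.frame s).det3_eq,
    h.pushOff_dot3_self, h.pushOff_dot3_unitNormal, h.pushOff_dot3_self, h.pushOff_dot3_unitNormal,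
    h.pushOff_dot3_unitTangent, h.pushOff_dot3_unitTangent, neg_sq]
  generalize Real.sqrt (1 + δ ^ 2) = r at *
  rw [← hr]
  congr 1
  · field_simp
    linear_combination hr
  · field_simp; ring

theorem eventually_sign_dot3_unitTangent (h : IsRegularCurve γ) (s : ℝ) :
    ∀ᶠ u in 𝓝 s, SignType.sign (dot3 (γ u) (unitTangent γ s)) = SignType.sign (u - s) := by
  have hderiv := hasDerivAt_const_dot3 (h.hasDerivAt s) (unitTangent γ s)
  rw [dot3_comm, h.deriv_dot3_unitTangent] at hderiv
  simp only [dot3_comm (γ _)]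
  exact eventually_nhdsWithin_sign_eq_of_deriv_pos (hderiv.deriv.symm ▸ h.speed_pos s)
    ((dot3_comm _ _).trans (h.frame s).orthogonal)

theorem eventually_bargmann_pushOff_mem_slitPlane (h : IsRegularCurve γ) (hsh : IsShell γ a b)
    {s : ℝ} (hs : s ∈ Set.Ioo a b) : ∀ᶠ δ in 𝓝[>] (0 : ℝ), ∀ u ∈ Set.Icc a b, u ≠ s →
      bargmann (pushOff γ s δ) (pushOff γ s (-δ)) (γ u) ∈ Complex.slitPlane := by
  have hγ := h.smooth.continuous
  let U := interior {u | SignType.sign (dot3 (γ u) (unitTangent γ s)) = SignType.sign (u - s)}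
  have hsU : s ∈ U := mem_interior_iff_mem_nhds.2 (h.eventually_sign_dot3_unitTangent s)
  have hfar : ∀ᶠ δ in 𝓝 (0 : ℝ), ∀ u ∈ Set.Icc a b \ U,
      Real.sqrt (1 + δ ^ 2) * dot3 (γ u) (γ s) < 1 := by
    refine (isCompact_Icc.diff isOpen_interior).eventually_forall_of_forall_eventually
      fun u hu => ?_
    refine ContinuousAt.eventually_lt
      (f := fun z : ℝ × ℝ => Real.sqrt (1 + z.1 ^ 2) * dot3 (γ z.2) (γ s))
      (by fun_prop) continuousAt_const ?_
    have hus : u ≠ s := by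
      rintro rfl
      exact hu.2 hsU
    simpa using dot3_lt_one (h.sphere u) (h.sphere s) (hsh.ne_of_mem_Ioo hs hu.1 hus)
  filter_upwards [hfar.filter_mono nhdsWithin_le_nhds, self_mem_nhdsWithin] with δ hδ hpos u hu hus
  have hpos : 0 < δ := hpos
  rw [h.bargmann_pushOff, Complex.mem_slitPlane_iff]
  by_cases huU : u ∈ U
  · have hsign := interior_subset huU
    refine Or.inr (mul_ne_zero (neg_ne_zero.2 (by positivity)) fun hzero => hus ?_)
    rwa [Set.mem_ofPred_eq, hzero, sign_zero, eq_comm, sign_eq_zero_iff, sub_eq_zero] at hsign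
  · exact Or.inl (mul_pos (by positivity) (sub_pos.2 (hδ u ⟨hu, huU⟩)))

theorem windingIntegral_sub_of_crosses_cut (h : IsRegularCurve γ) (hclosed : γ a = γ b) {s : ℝ}
    (hs : s ∈ Set.Ioo a b) {x y : R3} (hx : dot3 x x = 1) (hy : dot3 y y = 1)
    (hslit : ∀ u ∈ Set.Icc a b, u ≠ s → bargmann x y (γ u) ∈ Complex.slitPlane)
    (hre : (bargmann x y (γ s)).re < 0) (him : (bargmann x y (γ s)).im = 0)
    (hleft : ∀ᶠ u in 𝓝[<] s, 0 ≤ (bargmann x y (γ u)).im)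
    (hright : ∀ᶠ u in 𝓝[>] s, (bargmann x y (γ u)).im < 0) :
    windingIntegral γ a b x - windingIntegral γ a b y = 4 * Real.pi := by
  have hne : ∀ u ∈ Set.Icc a b, bargmann x y (γ u) ≠ 0 := fun u hu => by
    rcases eq_or_ne u s with rfl | hus
    · exact fun hzero => hre.ne (by rw [hzero, Complex.zero_re])
    · exact Complex.slitPlane_ne_zero (hslit u hu hus)
  have hoff := fun u hu => bargmann_ne_zero hx hy (h.sphere u) (hne u hu)
  have hsplit : ∀ {z}, (∀ u ∈ Set.Icc a b, dot3 z (γ u) < 1) →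
      windingIntegral γ a s z + windingIntegral γ s b z = windingIntegral γ a b z := fun hz =>
    intervalIntegral.integral_add_adjacent_intervals
      (h.intervalIntegrable_windingDensity hs.1.le fun u hu => hz u ⟨hu.1, hu.2.trans hs.2.le⟩)
      (h.intervalIntegrable_windingDensity hs.2.le fun u hu => hz u ⟨hs.1.le.trans hu.1, hu.2⟩)
  have hcont : Tendsto (fun u => bargmann x y (γ u)) (𝓝 s) (𝓝 (bargmann x y (γ s))) :=
    (hasDerivAt_bargmann (h.hasDerivAt s) x y).continuousAt.tendsto
  have hlimleft : Tendsto (fun u => (bargmann x y (γ u)).arg) (𝓝[<] s) (𝓝 Real.pi) :=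
    (Complex.tendsto_arg_nhdsWithin_im_nonneg_of_re_neg_of_im_zero hre him).comp
      (tendsto_nhdsWithin_iff.2 ⟨hcont.mono_left nhdsWithin_le_nhds, hleft⟩)
  have hlimright : Tendsto (fun u => (bargmann x y (γ u)).arg) (𝓝[>] s) (𝓝 (-Real.pi)) :=
    (Complex.tendsto_arg_nhdsWithin_im_neg_of_re_neg_of_im_zero hre him).comp
      (tendsto_nhdsWithin_iff.2 ⟨hcont.mono_left nhdsWithin_le_nhds, hright⟩)
  have hab := (hs.1.trans hs.2).le
  have harg := fun u hu hus =>
    (h.hasDerivAt_arg_bargmann hx hy (hslit u hu hus)).continuousAt.tendsto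
  have hfirst := h.windingIntegral_sub_eq_of_tendsto hs.1 hx hy
    (fun u hu => hne u ⟨hu.1, hu.2.trans hs.2.le⟩)
    (fun u hu => hslit u ⟨hu.1.le, hu.2.le.trans hs.2.le⟩ hu.2.ne)
    ((harg a ⟨le_rfl, hab⟩ hs.1.ne).mono_left nhdsWithin_le_nhds) hlimleft
  have hsecond := h.windingIntegral_sub_eq_of_tendsto hs.2 hx hy
    (fun u hu => hne u ⟨hs.1.le.trans hu.1, hu.2⟩)
    (fun u hu => hslit u ⟨hs.1.le.trans hu.1.le, hu.2.le⟩ hu.1.ne') hlimright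
    ((harg b ⟨hab, le_rfl⟩ hs.2.ne').mono_left nhdsWithin_le_nhds)
  rw [← hsplit fun u hu => (hoff u hu).1, ← hsplit fun u hu => (hoff u hu).2.1]
  rw [hclosed] at hfirst
  linarith

theorem eventually_windingIntegral_sub_pushOff (h : IsRegularCurve γ) (hsh : IsShell γ a b) {s : ℝ}
    (hs : s ∈ Set.Ioo a b) : ∀ᶠ δ in 𝓝[>] (0 : ℝ),
      windingIntegral γ a b (pushOff γ s δ) - windingIntegral γ a b (pushOff γ s (-δ)) =
        4 * Real.pi := by
  filter_upwards [h.eventually_bargmann_pushOff_mem_slitPlane hsh hs, self_mem_nhdsWithin]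
    with δ hslit hδ
  have hδ : 0 < δ := hδ
  have hcoef : -(2 * δ / (1 + δ ^ 2)) < 0 := neg_neg_of_pos (by positivity)
  refine h.windingIntegral_sub_of_crosses_cut hsh.2.2.1 hs (h.pushOff_unit _ _)
    (h.pushOff_unit _ _) hslit ?_ ?_ ?_ ?_
  · rw [h.bargmann_pushOff, h.sphere, mul_one]
    refine mul_neg_of_pos_of_neg (by positivity) (sub_neg.2 (Real.lt_sqrt_of_sq_lt ?_))
    nlinarith
  · rw [h.bargmann_pushOff, (h.frame s).orthogonal, mul_zero]
  · filter_upwards [(h.eventually_sign_dot3_unitTangent s).filter_mono nhdsWithin_le_nhds,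
      self_mem_nhdsWithin] with u hsign hu
    rw [sign_neg (sub_neg.2 hu), sign_eq_neg_one_iff] at hsign
    rw [h.bargmann_pushOff]
    exact (mul_pos_of_neg_of_neg hcoef hsign).le
  · filter_upwards [(h.eventually_sign_dot3_unitTangent s).filter_mono nhdsWithin_le_nhds,
      self_mem_nhdsWithin] with u hsign hu
    rw [sign_pos (sub_pos.2 hu), sign_eq_one_iff] at hsign
    rw [h.bargmann_pushOff]
    exact mul_neg_of_neg_of_pos hcoef hsign

end IsRegularCurve

end Jump

section Exterior

open Filter Topology

theorem hasFDerivAt_dot3_prod {f g : ℝ → R3} {f' g' : R3} {p : ℝ × ℝ}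
    (hf : HasDerivAt f f' p.1) (hg : HasDerivAt g g' p.2) :
    HasFDerivAt (fun z : ℝ × ℝ => dot3 (f z.1) (g z.2))
      (dot3 f' (g p.2) • ContinuousLinearMap.fst ℝ ℝ ℝ +
        dot3 (f p.1) g' • ContinuousLinearMap.snd ℝ ℝ ℝ) p := by
  have hf : ∀ i, HasFDerivAt (fun z : ℝ × ℝ => f z.1 i) (f' i • ContinuousLinearMap.fst ℝ ℝ ℝ) p :=
    fun i => (hasDerivAt_pi.1 hf i).comp_hasFDerivAt p hasFDerivAt_fst
  have hg : ∀ i, HasFDerivAt (fun z : ℝ × ℝ => g z.2 i) (g' i • ContinuousLinearMap.snd ℝ ℝ ℝ) p :=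
    fun i => (hasDerivAt_pi.1 hg i).comp_hasFDerivAt p hasFDerivAt_snd
  convert! (((hf 0).mul (hg 0)).add ((hf 1).mul (hg 1))).add ((hf 2).mul (hg 2)) using 1
  ext <;> simp [dot3]
  ring

theorem eventually_nonneg_of_triangular {g₁ g₂ : ℝ × ℝ → ℝ} {p : ℝ × ℝ} {c m k : ℝ} (hc : c ≠ 0)
    (hk : k ≠ 0)
    (h₁ : HasFDerivAt g₁ (c • ContinuousLinearMap.fst ℝ ℝ ℝ +
      m • ContinuousLinearMap.snd ℝ ℝ ℝ) p) (h₁₀ : g₁ p = 0)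
    (h₂ : HasFDerivAt g₂ (k • ContinuousLinearMap.snd ℝ ℝ ℝ) p) (h₂₀ : g₂ p = 0) :
    ∀ᶠ z in 𝓝 p, g₁ z = 0 → 0 ≤ (z.2 - p.2) * k → 0 ≤ g₂ z := by
  let l := 𝓝[{z | g₁ z = 0}] p
  have hfirst : (fun z : ℝ × ℝ => ((z.1 - p.1 + m / c * (z.2 - p.2), 0) : ℝ × ℝ))
      =o[l] fun z => z - p := by
    refine ((h₁.isLittleO.mono nhdsWithin_le_nhds).const_mul_left (-c⁻¹)).congr' ?_ .rfl
      |>.prod_left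
      (Asymptotics.isLittleO_zero _ _)
    filter_upwards [self_mem_nhdsWithin] with z hz
    have hz : g₁ z = 0 := hz
    simp only [hz, h₁₀, sub_self, _root_.add_apply, _root_.smul_apply,
      ContinuousLinearMap.coe_fst', Prod.fst_sub, smul_eq_mul, ContinuousLinearMap.coe_snd',
      Prod.snd_sub, zero_sub, neg_add_rev, neg_mul]
    field_simp
    ring
  have hdist : (fun z => z - p) =O[l] fun z => z.2 - p.2 := by
    have hsnd := Asymptotics.isBigO_refl (fun z : ℝ × ℝ => z.2 - p.2) l
    refine hfirst.right_isBigO_sub.trans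
      (((hsnd.const_mul_left (-(m / c))).prod_left hsnd).congr_left
      fun z => ?_)
    ext <;> simp
  have hsecond : (fun z => g₂ z - k * (z.2 - p.2)) =o[l] fun z => z.2 - p.2 :=
    ((h₂.isLittleO.mono nhdsWithin_le_nhds).trans_isBigO hdist).congr_left fun z => by
      simp [h₂₀]
  filter_upwards [eventually_nhdsWithin_iff.1 (hsecond.def (abs_pos.2 hk))] with z hz h₁z hsign
  specialize hz h₁z
  rw [Real.norm_eq_abs, Real.norm_eq_abs, ← abs_mul, mul_comm k, abs_of_nonneg hsign] at hz
  linarith [(abs_le.1 hz).1]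

variable {γ : ℝ → R3} {a b : ℝ}

theorem IsShell.eq_endpoints (hsh : IsShell γ a b) {s t : ℝ} (hs : s ∈ Set.Icc a b)
    (ht : t ∈ Set.Icc a b) (hst : γ s = γ t) (hne : s ≠ t) : s = a ∧ t = b ∨ s = b ∧ t = a := by
  have hs' : s ∉ Set.Ioo a b := fun hs' => hsh.ne_of_mem_Ioo hs' ht hne.symm hst.symm
  have ht' : t ∉ Set.Ioo a b := fun ht' => hsh.ne_of_mem_Ioo ht' hs hne hst
  grind

theorem IsPositiveShell.deriv_dot3_unitNormal_left (hsh : IsPositiveShell γ a b)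
    (h : IsRegularCurve γ) : dot3 (deriv γ b) (unitNormal γ a) < 0 := by
  have hcorner := hsh.2
  rw [h.det3_deriv] at hcorner
  exact neg_of_mul_neg_right hcorner (h.speed_pos a).le

theorem IsPositiveShell.deriv_dot3_unitNormal_right (hsh : IsPositiveShell γ a b)
    (h : IsRegularCurve γ) : 0 < dot3 (deriv γ a) (unitNormal γ b) := by
  have hcorner := hsh.2
  rw [hsh.1.2.2.1, det3_swap, h.det3_deriv, neg_lt_zero] at hcorner
  exact pos_of_mul_pos_right hcorner (h.speed_pos b).le

namespace IsRegularCurve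

theorem eventually_pushOff_ne_self (h : IsRegularCurve γ) (s : ℝ) :
    ∀ᶠ z : (ℝ × ℝ) × ℝ in 𝓝 ((s, 0), s), z.1.2 ≠ 0 → γ z.2 ≠ pushOff γ z.1.1 z.1.2 := by
  have hγ := h.smooth.continuous
  have hγ' := h.contDiff_deriv.continuous
  have hT := h.contDiff_unitTangent.continuous
  have hpos : ∀ᶠ w : ℝ × ℝ in 𝓝 (s, s), 0 < dot3 (unitTangent γ w.1) (deriv γ w.2) :=
    ContinuousAt.eventually_lt continuousAt_const (by fun_prop)
      (by rw [dot3_comm, h.deriv_dot3_unitTangent]; exact h.speed_pos s)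
  obtain ⟨ε, hε, hball⟩ := Metric.eventually_nhds_iff_ball.1 hpos
  simp only [← ball_prod_same, Set.mem_prod, and_imp, Prod.forall] at hball
  filter_upwards [Metric.ball_mem_nhds ((s, (0 : ℝ)), s) hε] with ⟨⟨u, δ⟩, t⟩ hz hδ heq
  rw [← ball_prod_same, ← ball_prod_same] at hz
  obtain ⟨⟨hu, -⟩, ht⟩ := hz
  have hmono : StrictMonoOn (fun t => dot3 (unitTangent γ u) (γ t)) (Metric.ball s ε) := by
    refine strictMonoOn_of_deriv_pos (convex_ball s ε) (by fun_prop) fun w hw => ?_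
    rw [(hasDerivAt_const_dot3 (h.hasDerivAt w) _).deriv]
    exact hball u w hu (interior_subset hw)
  have htu : t = u := hmono.injOn ht hu (by
    simp only
    rw [heq, dot3_comm, h.pushOff_dot3_unitTangent, dot3_comm, (h.frame u).orthogonal])
  have hnormal := (h.frame u).left_cross
  rw [← htu, heq, htu, h.pushOff_dot3_unitNormal] at hnormal
  exact mul_ne_zero (by positivity) hδ hnormal

theorem eventually_pushOff_ne_corner (h : IsRegularCurve γ) {s t : ℝ} (hst : γ s = γ t)
    (hk : dot3 (deriv γ t) (unitNormal γ s) ≠ 0) :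
    ∀ᶠ z : (ℝ × ℝ) × ℝ in 𝓝 ((s, 0), t), z.1.2 < 0 →
      0 ≤ (z.2 - t) * dot3 (deriv γ t) (unitNormal γ s) → γ z.2 ≠ pushOff γ z.1.1 z.1.2 := by
  have h₁ := hasFDerivAt_dot3_prod (p := (s, t)) (h.hasDerivAt_deriv s) (h.hasDerivAt t)
  have h₂ := hasFDerivAt_dot3_prod (p := (s, t)) (h.hasDerivAt_unitNormal s) (h.hasDerivAt t)
  rw [← hst, h.deriv_deriv_dot3_self] at h₁
  rw [← hst, smul_dot3, dot3_comm (deriv γ s), h.dot3_deriv, mul_zero, zero_smul, zero_add,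
    dot3_comm (unitNormal γ s)] at h₂
  have hsign := eventually_nonneg_of_triangular
    (neg_ne_zero.2 (pow_pos (h.speed_pos s) 2).ne') hk h₁
    (by simp only; rw [← hst, dot3_comm, h.dot3_deriv]) h₂
    (by simp only; rw [← hst, dot3_comm, (h.frame s).left_cross])
  have hproj : Continuous fun z : (ℝ × ℝ) × ℝ => (z.1.1, z.2) := by fun_prop
  filter_upwards [(hproj.tendsto ((s, 0), t)).eventually hsign] with ⟨⟨u, δ⟩, t'⟩ hz hδ ht' heq
  simp only at hz heq hδ
  rw [heq, dot3_comm, h.deriv_eq_smul_unitTangent, dot3_smul, h.pushOff_dot3_unitTangent,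
    dot3_comm (unitNormal γ u), h.pushOff_dot3_unitNormal] at hz
  exact absurd (hz (mul_zero _) ht') (not_le.2 (mul_neg_of_pos_of_neg (by positivity) hδ))

theorem eventually_pushOff_ne (h : IsRegularCurve γ) (hsh : IsPositiveShell γ a b) {s t : ℝ}
    (hs : s ∈ Set.Icc a b) (ht : t ∈ Set.Icc a b) :
    ∀ᶠ z : (ℝ × ℝ) × ℝ in 𝓝 ((s, 0), t), z.2 ∈ Set.Icc a b → z.1.2 < 0 →
      γ z.2 ≠ pushOff γ z.1.1 z.1.2 := by
  have hγ := h.smooth.continuous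
  have hpush := h.continuous_pushOff
  by_cases hst : γ s = γ t
  · rcases eq_or_ne s t with rfl | hne
    · exact (h.eventually_pushOff_ne_self s).mono fun z hz _ hδ => hz hδ.ne
    rcases hsh.1.eq_endpoints hs ht hst hne with ⟨rfl, rfl⟩ | ⟨rfl, rfl⟩
    · have hk := hsh.deriv_dot3_unitNormal_left h
      refine (h.eventually_pushOff_ne_corner hst hk.ne).mono fun z hz hzt hδ => hz hδ ?_
      exact mul_nonneg_of_nonpos_of_nonpos (sub_nonpos.2 hzt.2) hk.le
    · have hk := hsh.deriv_dot3_unitNormal_right h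
      refine (h.eventually_pushOff_ne_corner hst hk.ne').mono fun z hz hzt hδ => hz hδ ?_
      exact mul_nonneg (sub_nonneg.2 hzt.1) hk.le
  · have hne : γ t ≠ pushOff γ s 0 := by simpa [pushOff] using Ne.symm hst
    exact ((ContinuousAt.ne_iff_eventually_ne (f := fun z : (ℝ × ℝ) × ℝ => γ z.2)
      (g := fun z => pushOff γ z.1.1 z.1.2) (x := ((s, 0), t)) (by fun_prop)
      (hpush.comp continuous_fst).continuousAt).1 hne).mono fun z hz _ _ => hz

theorem eventually_pushOff_notMem (h : IsRegularCurve γ) (hsh : IsPositiveShell γ a b) {s : ℝ}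
    (hs : s ∈ Set.Icc a b) :
    ∀ᶠ z : ℝ × ℝ in 𝓝 (s, 0), z.2 < 0 → pushOff γ z.1 z.2 ∉ γ '' Set.Icc a b := by
  have hne : ∀ᶠ z : ℝ × ℝ in 𝓝 (s, 0), ∀ t ∈ Set.Icc a b,
      t ∈ Set.Icc a b → z.2 < 0 → γ t ≠ pushOff γ z.1 z.2 :=
    isCompact_Icc.eventually_forall_of_forall_eventually fun t ht =>
      h.eventually_pushOff_ne hsh hs ht
  filter_upwards [hne] with z hz hδ
  rintro ⟨t, ht, heq⟩
  exact hz t ht ht hδ heq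

theorem eventually_pushOff_neg_notMem_closure (h : IsRegularCurve γ) (hsh : IsShell γ a b)
    {Δ : Set R3} (hΔ : IsInteriorDomain γ a b 1 Δ) {u : ℝ} (hu : u ∈ Set.Ioo a b) :
    ∀ᶠ δ in 𝓝[>] (0 : ℝ), ∀ R : Set R3, IsPreconnected R → R ⊆ sphere2 \ γ '' Set.Icc a b →
      pushOff γ u (-δ) ∈ R → Disjoint R (closure Δ) := by
  obtain ⟨⟨q, -, hΔq⟩, hnormal⟩ := hΔ
  have hΔc : IsPreconnected Δ := hΔq ▸ isPreconnected_connectedComponentIn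
  have hΔsub : Δ ⊆ sphere2 \ γ '' Set.Icc a b := hΔq ▸ connectedComponentIn_subset _ _
  obtain ⟨ε, hε, hin⟩ := hnormal u hu
  filter_upwards [h.eventually_windingIntegral_sub_pushOff hsh hu, Ioo_mem_nhdsGT hε]
    with δ hjump hδ R hR hRsub hmem
  have hδΔ := hin δ hδ
  rw [one_mul, h.normalize3_eq_pushOff] at hδΔ
  refine Set.disjoint_left.2 fun x hxR hxΔ => ?_
  rw [← h.windingIntegral_eq_of_mem_closure hsh.1 hsh.2.2.1 hΔc hΔsub hxΔ (hRsub hxR) hδΔ,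
    h.windingIntegral_eq_of_isPreconnected hsh.1 hsh.2.2.1 hR hRsub hxR hmem, sub_self] at hjump
  exact absurd hjump (by positivity)

theorem eventually_pushOff_notMem_closure (h : IsRegularCurve γ) (hsh : IsPositiveShell γ a b)
    {Δ : Set R3} (hΔ : IsInteriorDomain γ a b 1 Δ) {s : ℝ} (hs : s ∈ Set.Icc a b) :
    ∀ᶠ z : ℝ × ℝ in 𝓝 (s, 0), z.2 < 0 → pushOff γ z.1 z.2 ∉ closure Δ := by
  obtain ⟨ε, hε, hball⟩ := Metric.eventually_nhds_iff_ball.1 (h.eventually_pushOff_notMem hsh hs)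
  let D := Metric.ball (s, (0 : ℝ)) ε ∩ {z | z.2 < 0}
  have hD : IsPreconnected ((fun z : ℝ × ℝ => pushOff γ z.1 z.2) '' D) :=
    ((convex_ball _ _).inter
      (convex_halfSpace_lt (LinearMap.snd ℝ ℝ ℝ).isLinear 0)).isPreconnected.image _
      h.continuous_pushOff.continuousOn
  have hDsub : (fun z : ℝ × ℝ => pushOff γ z.1 z.2) '' D ⊆ sphere2 \ γ '' Set.Icc a b := by
    rintro _ ⟨z, hz, rfl⟩
    exact ⟨h.pushOff_unit _ _, hball z hz.1 hz.2⟩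
  obtain ⟨u, hus, hu⟩ : (Metric.ball s ε ∩ Set.Ioo a b).Nonempty := by
    refine mem_closure_iff_nhds.1 ?_ _ (Metric.ball_mem_nhds s hε)
    rwa [closure_Ioo hsh.1.1.ne]
  obtain ⟨δ, hdisj, hδ⟩ := ((h.eventually_pushOff_neg_notMem_closure hsh.1 hΔ hu).and
    (Ioo_mem_nhdsGT hε)).exists
  have hmem : (u, -δ) ∈ D := by
    refine ⟨?_, neg_lt_zero.2 hδ.1⟩
    rw [← ball_prod_same]
    exact ⟨hus, by simpa [abs_of_pos hδ.1] using hδ.2⟩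
  filter_upwards [Metric.ball_mem_nhds _ hε] with z hz hδz
  exact Set.disjoint_left.1 (hdisj _ hD hDsub ⟨_, hmem, rfl⟩) ⟨z, ⟨hz, hδz⟩, rfl⟩

end IsRegularCurve

end Exterior

section Tangency

open Filter Topology

theorem div_sqrt_lt_one (μ : ℝ) : μ / Real.sqrt (1 + μ ^ 2) < 1 := by
  rw [div_lt_one (by positivity)]
  exact Real.lt_sqrt_of_sq_lt (by linarith)

theorem eventually_lt_of_hasDerivAt {f : ℝ → ℝ} {f' x : ℝ} (hf : HasDerivAt f f' x)
    (hf' : 0 < f') : ∀ᶠ u in 𝓝[>] x, f x < f u := by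
  have hsign := eventually_nhdsWithin_sign_eq_of_deriv_pos (f := fun u => f u - f x)
    (by rwa [(hf.sub_const _).deriv]) (sub_self _)
  filter_upwards [hsign.filter_mono nhdsWithin_le_nhds, self_mem_nhdsWithin] with u hu hxu
  rw [sign_pos (sub_pos.2 (Set.mem_Ioi.1 hxu))] at hu
  exact sub_pos.1 (sign_eq_one_iff.1 hu)

theorem eventually_le_of_eventually_ne {G : ℝ × ℝ → ℝ} {s c d : ℝ} (hG : Continuous G)
    (hs : G (s, 0) = c) (hderiv : HasDerivAt (fun δ => G (s, δ)) d 0) (hd : 0 < d)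
    (hne : ∀ᶠ z in 𝓝 (s, 0), 0 < z.2 → G z ≠ c) : ∀ᶠ u in 𝓝 s, c ≤ G (u, 0) := by
  obtain ⟨ε, hε, hball⟩ := Metric.eventually_nhds_iff_ball.1 hne
  obtain ⟨δ₀, hup, hδ₀, hδ₀ε⟩ :=
    ((eventually_lt_of_hasDerivAt hderiv hd).and (Ioo_mem_nhdsGT hε)).exists
  have hnear : ∀ᶠ u in 𝓝 s, c < G (u, δ₀) :=
    ContinuousAt.eventually_lt continuousAt_const (by fun_prop) (hs ▸ hup)
  filter_upwards [hnear, Metric.ball_mem_nhds s hε] with u hu hus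
  by_contra! hlt
  obtain ⟨δ, hδ, hδc⟩ := intermediate_value_Ioo hδ₀.le
    (f := fun δ => G (u, δ)) (by fun_prop) ⟨hlt, hu⟩
  refine hball (u, δ) ?_ hδ.1 hδc
  rw [← ball_prod_same]
  exact ⟨hus, by simpa [abs_of_pos hδ.1] using hδ.2.trans hδ₀ε⟩

theorem eventually_lt_of_isPreconnected {X α : Type*} [TopologicalSpace X] [T1Space X]
    [∀ x : X, (𝓝[≠] x).NeBot] [LinearOrder α] [TopologicalSpace α] [OrderClosedTopology α]
    {f : X → α} {c : α} {S : Set X} (hS : IsPreconnected S) (hf : Continuous f)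
    (hcontact : ∀ x ∈ S, f x = c → (∀ᶠ u in 𝓝 x, c ≤ f u) ∨ ∀ᶠ u in 𝓝[≠] x, f u < c)
    {t : X} (ht : t ∈ S) (htc : ∀ᶠ u in 𝓝[≠] t, f u < c) {x : X} (hx : x ∈ S) :
    ∀ᶠ u in 𝓝[≠] x, f u < c := by
  have hdisj : Disjoint {x | ∀ᶠ u in 𝓝 x, c ≤ f u} {x | ∀ᶠ u in 𝓝[≠] x, f u < c} := by
    refine Set.disjoint_left.2 fun x hle hlt => ?_
    obtain ⟨u, hle, hlt⟩ := ((hle.filter_mono nhdsWithin_le_nhds).and hlt).exists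
    exact hle.not_gt hlt
  refine hS.subset_right_of_subset_union isOpen_setOfPred_eventually_nhds
    isOpen_setOfPred_eventually_nhdsWithin hdisj (fun x hx => ?_) ⟨t, ht, htc⟩ hx
  rcases lt_trichotomy (f x) c with hlt | heq | hgt
  · exact .inr ((hf.continuousAt.eventually_lt continuousAt_const hlt).filter_mono
      nhdsWithin_le_nhds)
  · exact hcontact x hx heq
  · exact .inl ((continuousAt_const.eventually_lt hf.continuousAt hgt).mono fun _ => le_of_lt)

variable {γ : ℝ → R3} {a b μ : ℝ}

namespace IsRegularCurve

theorem deriv_dot3_tangentCenter (h : IsRegularCurve γ) (μ s : ℝ) :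
    dot3 (deriv γ s) (tangentCenter μ γ s) = 0 := by
  rw [h.deriv_eq_smul_unitTangent, smul_dot3, h.unitTangent_dot3_tangentCenter, mul_zero]

theorem hasDerivAt_pushOff (h : IsRegularCurve γ) (s m k : ℝ) :
    HasDerivAt (fun δ => pushOff γ (s + m * δ) (k * δ)) (m • deriv γ s + k • unitNormal γ s) 0 := by
  have hline : ∀ c r : ℝ, HasDerivAt (fun δ => c + r * δ) r 0 := fun c r => by
    simpa using ((hasDerivAt_id (0 : ℝ)).const_mul r).const_add c
  have hγ : HasDerivAt (fun δ => γ (s + m * δ)) (m • deriv γ s) 0 :=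
    (h.hasDerivAt s).scomp_of_eq 0 (hline s m) (by simp)
  have hn := (h.hasDerivAt_unitNormal s).scomp_of_eq 0 (hline s m) (by simp)
  have hk : HasDerivAt (fun δ => k * δ) k 0 := by simpa using hline 0 k
  have hsqrt : HasDerivAt (fun δ => Real.sqrt (1 + (k * δ) ^ 2)) 0 0 := by
    simpa using ((hk.pow 2).const_add 1).sqrt (by simp)
  convert! (hsqrt.inv (by simp)).smul (hγ.add (hk.smul hn)) using 1
  simp

theorem eq_tangentCenter_or (h : IsRegularCurve γ) {s : ℝ} {o : R3} (ho : dot3 o o = 1)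
    (hs : dot3 (γ s) o = μ / Real.sqrt (1 + μ ^ 2)) (hT : dot3 (deriv γ s) o = 0) :
    o = tangentCenter μ γ s ∨ dot3 (unitNormal γ s) o = -(Real.sqrt (1 + μ ^ 2))⁻¹ := by
  have hr2 : Real.sqrt (1 + μ ^ 2) ^ 2 = 1 + μ ^ 2 := Real.sq_sqrt (by positivity)
  have hT' : dot3 (unitTangent γ s) o = 0 := by rw [unitTangent, smul_dot3, hT, mul_zero]
  have hsq : dot3 (unitNormal γ s) o ^ 2 = (Real.sqrt (1 + μ ^ 2))⁻¹ ^ 2 := by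
    have hframe := (h.frame s).dot3_eq o o
    rw [ho, dot3_comm o, dot3_comm o, dot3_comm o, hs, hT'] at hframe
    field_simp at hframe ⊢
    linarith
  refine (sq_eq_sq_iff_eq_or_eq_neg.1 hsq).imp_left fun hn => (h.frame s).ext ?_ ?_ ?_
  · rw [dot3_comm, hs, dot3_comm, h.dot3_tangentCenter]
  · rw [dot3_comm, hT', dot3_comm, h.unitTangent_dot3_tangentCenter]
  · rw [dot3_comm, hn, dot3_comm, h.unitNormal_dot3_tangentCenter]

theorem exists_direction_pos_of_ne_tangentCenter (h : IsRegularCurve γ) {s : ℝ} {o : R3}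
    (ho : dot3 o o = 1) (hso : dot3 (γ s) o = μ / Real.sqrt (1 + μ ^ 2))
    (hne : o ≠ tangentCenter μ γ s) :
    ∃ m : ℝ, 0 < dot3 o (m • deriv γ s + (-1 : ℝ) • unitNormal γ s) := by
  simp only [dot3_comm o, add_dot3, smul_dot3]
  by_cases hT : dot3 (deriv γ s) o = 0
  · refine ⟨0, ?_⟩
    rw [(h.eq_tangentCenter_or ho hso hT).resolve_left hne, zero_mul, zero_add, neg_one_mul,
      neg_neg]
    positivity
  · refine ⟨(1 + dot3 (unitNormal γ s) o) / dot3 (deriv γ s) o, ?_⟩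
    rw [div_mul_cancel₀ _ hT]
    linarith

/- If the circle is not the tangent one, some path leaves `γ s` towards the exterior side of the
shell and into the open disk; were the shell to enter the complement of the disk near `γ s`, these
exterior paths would meet the circle, which lies in `closure Δ`. -/
theorem eventually_le_of_ne_tangentCenter (h : IsRegularCurve γ) (hsh : IsPositiveShell γ a b)
    {Δ : Set R3} (hΔ : IsInteriorDomain γ a b 1 Δ) {s : ℝ} (hs : s ∈ Set.Icc a b) {o : R3}
    (ho : dot3 o o = 1) (hso : dot3 (γ s) o = μ / Real.sqrt (1 + μ ^ 2))
    (hC : muCircle μ o ⊆ closure Δ) (hne : o ≠ tangentCenter μ γ s) :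
    ∀ᶠ u in 𝓝 s, μ / Real.sqrt (1 + μ ^ 2) ≤ dot3 (γ u) o := by
  obtain ⟨m, hm⟩ := h.exists_direction_pos_of_ne_tangentCenter ho hso hne
  have hpush := h.continuous_pushOff
  have hG : Continuous fun z : ℝ × ℝ => dot3 o (pushOff γ (z.1 + m * z.2) (-1 * z.2)) :=
    continuous_dot3 continuous_const
      (hpush.comp (g := fun z : ℝ × ℝ => pushOff γ z.1 z.2)
        (f := fun z : ℝ × ℝ => (z.1 + m * z.2, -1 * z.2)) (by fun_prop))
  have hshear : Tendsto (fun z : ℝ × ℝ => (z.1 + m * z.2, -1 * z.2)) (𝓝 (s, 0)) (𝓝 (s, 0)) :=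
    Continuous.tendsto' (by fun_prop) _ _ (by simp)
  have hG₀ : ∀ u, dot3 o (pushOff γ (u + m * 0) (-1 * 0)) = dot3 (γ u) o := fun u => by
    simp [pushOff, dot3_comm]
  simp only [← hG₀]
  refine eventually_le_of_eventually_ne hG ((hG₀ s).trans hso)
    (hasDerivAt_const_dot3 (h.hasDerivAt_pushOff s m (-1)) o) hm ?_
  filter_upwards [hshear.eventually (h.eventually_pushOff_notMem_closure hsh hΔ hs)]
    with z hz hδ heq
  exact hz (by simpa using hδ) (hC ⟨h.pushOff_unit _ _, (dot3_comm _ _).trans heq⟩)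

theorem deriv_dot3_eq_zero_of_subset_closure (h : IsRegularCurve γ) (hsh : IsPositiveShell γ a b)
    {Δ : Set R3} (hΔ : IsInteriorDomain γ a b 1 Δ) {s : ℝ} (hs : s ∈ Set.Icc a b) {o : R3}
    (ho : dot3 o o = 1) (hso : dot3 (γ s) o = μ / Real.sqrt (1 + μ ^ 2))
    (hC : muCircle μ o ⊆ closure Δ) : dot3 (deriv γ s) o = 0 := by
  by_cases hne : o = tangentCenter μ γ s
  · rw [hne, h.deriv_dot3_tangentCenter]
  have hmin : IsLocalMin (fun u => dot3 o (γ u)) s := by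
    filter_upwards [h.eventually_le_of_ne_tangentCenter hsh hΔ hs ho hso hC hne] with u hu
    rwa [dot3_comm, hso, dot3_comm]
  rw [dot3_comm]
  exact hmin.hasDerivAt_eq_zero (hasDerivAt_const_dot3 (h.hasDerivAt s) o)

/- At the corner a touching circle would be tangent to two independent directions, so its center
would be `± γ a`, at height `±1` rather than `μ / √(1 + μ²)`. -/
theorem mem_Ioo_of_subset_closure (h : IsRegularCurve γ) (hμ : 0 < μ) (hsh : IsPositiveShell γ a b)
    {Δ : Set R3} (hΔ : IsInteriorDomain γ a b 1 Δ) {s : ℝ} (hs : s ∈ Set.Icc a b) {o : R3}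
    (ho : dot3 o o = 1) (hso : dot3 (γ s) o = μ / Real.sqrt (1 + μ ^ 2))
    (hC : muCircle μ o ⊆ closure Δ) : s ∈ Set.Ioo a b := by
  by_contra hmem
  have hab := hsh.1.1
  have hclosed := hsh.1.2.2.1
  have hsa : γ s = γ a := by
    rcases Set.eq_endpoints_or_mem_Ioo_of_mem_Icc hs with rfl | rfl | hs
    exacts [rfl, hclosed.symm, absurd hs hmem]
  rw [hsa] at hso
  have hda := h.deriv_dot3_eq_zero_of_subset_closure hsh hΔ (Set.left_mem_Icc.2 hab.le) ho hso hC
  have hdb := h.deriv_dot3_eq_zero_of_subset_closure hsh hΔ (Set.right_mem_Icc.2 hab.le) ho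
    (hclosed ▸ hso) hC
  have hT : dot3 o (unitTangent γ a) = 0 := by rw [dot3_comm, unitTangent, smul_dot3, hda, mul_zero]
  have hn : dot3 o (unitNormal γ a) = 0 := by
    have hframe := (h.frame a).dot3_eq (deriv γ b) o
    rw [hdb, hT, hclosed, dot3_comm (deriv γ b) (γ b), h.dot3_deriv, zero_mul, mul_zero, zero_add,
      zero_add] at hframe
    exact (mul_eq_zero.1 hframe.symm).resolve_left (hsh.deriv_dot3_unitNormal_left h).ne
  have hunit := (h.frame a).dot3_eq o o
  rw [ho, hT, hn, dot3_comm, hso] at hunit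
  have hlt := div_sqrt_lt_one μ
  have hpos : 0 < μ / Real.sqrt (1 + μ ^ 2) := by positivity
  nlinarith

theorem eventually_dot3_tangentCenter_lt (h : IsRegularCurve γ) {s : ℝ} (hκ : kappa γ s < μ) :
    ∀ᶠ z : ℝ × ℝ in 𝓝 (s, s), z.1 ≠ z.2 →
      dot3 (γ z.2) (tangentCenter μ γ z.1) < μ / Real.sqrt (1 + μ ^ 2) := by
  have ho := h.continuous_tangentCenter μ
  have hγ := h.smooth.continuous
  have hγ'' : Continuous (deriv (deriv γ)) := h.contDiff_deriv.continuous_deriv (by simp)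
  have hsecond : dot3 (tangentCenter μ γ s) (deriv (deriv γ) s) < 0 := by
    rw [dot3_comm, tangentCenter, dot3_smul, dot3_add, dot3_smul, h.deriv_deriv_dot3_self,
      h.deriv_deriv_dot3_unitNormal]
    have := mul_pos (sub_pos.2 hκ) (pow_pos (h.speed_pos s) 2)
    exact mul_neg_of_pos_of_neg (by positivity) (by linarith)
  have hneg : ∀ᶠ z : ℝ × ℝ in 𝓝 (s, s),
      dot3 (tangentCenter μ γ z.1) (deriv (deriv γ) z.2) < 0 :=
    ContinuousAt.eventually_lt (by fun_prop) continuousAt_const hsecond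
  obtain ⟨ε, hε, hball⟩ := Metric.eventually_nhds_iff_ball.1 hneg
  simp only [← ball_prod_same] at hball
  filter_upwards [Metric.ball_mem_nhds (s, s) hε] with ⟨t, u⟩ hz hne
  rw [← ball_prod_same] at hz
  obtain ⟨ht, hu⟩ := hz
  have hd : ∀ w, HasDerivAt (fun u => dot3 (tangentCenter μ γ t) (γ u))
      (dot3 (tangentCenter μ γ t) (deriv γ w)) w :=
    fun w => hasDerivAt_const_dot3 (h.hasDerivAt w) _
  have hconc : StrictConcaveOn ℝ (Metric.ball s ε) fun u => dot3 (tangentCenter μ γ t) (γ u) := by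
    refine strictConcaveOn_of_deriv2_neg' (convex_ball s ε) (by fun_prop) fun w hw => ?_
    rw [Function.iterate_succ_apply, Function.iterate_one, funext fun w => (hd w).deriv,
      (hasDerivAt_const_dot3 (h.hasDerivAt_deriv w) _).deriv]
    exact hball (t, w) ⟨ht, hw⟩
  have hdt := hd t
  rw [dot3_comm, h.deriv_dot3_tangentCenter] at hdt
  rw [← h.dot3_tangentCenter μ t, dot3_comm, dot3_comm (γ t)]
  rcases lt_or_gt_of_ne hne with hlt | hlt
  · exact (slope_neg_iff_of_le hlt.le).1 (hconc.slope_lt_of_hasDerivAt ht hu hlt hdt)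
  · exact (slope_pos_iff_of_le hlt.le).1 (hconc.lt_slope_of_hasDerivAt hu ht hlt hdt)

theorem eventually_nhdsNE_dot3_tangentCenter_lt (h : IsRegularCurve γ) {s : ℝ}
    (hκ : kappa γ s < μ) :
    ∀ᶠ u in 𝓝[≠] s, dot3 (γ u) (tangentCenter μ γ s) < μ / Real.sqrt (1 + μ ^ 2) := by
  have hslice : Tendsto (fun u : ℝ => (s, u)) (𝓝[≠] s) (𝓝 (s, s)) :=
    (Continuous.tendsto (by fun_prop) s).mono_left nhdsWithin_le_nhds
  filter_upwards [hslice.eventually (h.eventually_dot3_tangentCenter_lt hκ), self_mem_nhdsWithin]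
    with u hu hne
  exact hu (Ne.symm hne)

/- Along the shell, the set of points near which it stays in the closed disk and the set of points
near which it stays strictly outside are open and, by tangency, cover `[a, b]`. -/
theorem eventually_lt_of_subset_closure (h : IsRegularCurve γ)
    (hκ : ∀ s ∈ Set.Icc a b, kappa γ s < μ) (hsh : IsPositiveShell γ a b) {Δ : Set R3}
    (hΔ : IsInteriorDomain γ a b 1 Δ) {t : ℝ} (ht : t ∈ Set.Icc a b)
    (hC : muCircle μ (tangentCenter μ γ t) ⊆ closure Δ) {s : ℝ} (hs : s ∈ Set.Icc a b) :
    ∀ᶠ u in 𝓝[≠] s, dot3 (γ u) (tangentCenter μ γ t) < μ / Real.sqrt (1 + μ ^ 2) := by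
  have hγ := h.smooth.continuous
  refine eventually_lt_of_isPreconnected isPreconnected_Icc (by fun_prop) (fun x hx hxc => ?_) ht
    (h.eventually_nhdsNE_dot3_tangentCenter_lt (hκ t ht)) hs
  by_cases hne : tangentCenter μ γ t = tangentCenter μ γ x
  · exact .inr (hne ▸ h.eventually_nhdsNE_dot3_tangentCenter_lt (hκ x hx))
  · exact .inl (h.eventually_le_of_ne_tangentCenter hsh hΔ hx (h.tangentCenter_unit μ t) hxc hC hne)

theorem dot3_le_of_subset_closure (h : IsRegularCurve γ)
    (hκ : ∀ s ∈ Set.Icc a b, kappa γ s < μ) (hsh : IsPositiveShell γ a b) {Δ : Set R3}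
    (hΔ : IsInteriorDomain γ a b 1 Δ) {t : ℝ} (ht : t ∈ Set.Icc a b)
    (hC : muCircle μ (tangentCenter μ γ t) ⊆ closure Δ) {s : ℝ} (hs : s ∈ Set.Icc a b) :
    dot3 (γ s) (tangentCenter μ γ t) ≤ μ / Real.sqrt (1 + μ ^ 2) := by
  have hγ := h.smooth.continuous
  have hcont : Continuous fun u => dot3 (γ u) (tangentCenter μ γ t) := by fun_prop
  exact le_of_tendsto ((hcont.tendsto s).mono_left nhdsWithin_le_nhds)
    ((h.eventually_lt_of_subset_closure hκ hsh hΔ ht hC hs).mono fun _ => le_of_lt)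

theorem tangentCenter_eq_of_subset_closure (h : IsRegularCurve γ)
    (hκ : ∀ s ∈ Set.Icc a b, kappa γ s < μ) (hsh : IsPositiveShell γ a b) {Δ : Set R3}
    (hΔ : IsInteriorDomain γ a b 1 Δ) {t : ℝ} (ht : t ∈ Set.Icc a b)
    (hC : muCircle μ (tangentCenter μ γ t) ⊆ closure Δ) {s : ℝ} (hs : s ∈ Set.Icc a b)
    (hso : dot3 (γ s) (tangentCenter μ γ t) = μ / Real.sqrt (1 + μ ^ 2)) :
    tangentCenter μ γ s = tangentCenter μ γ t := by
  by_contra hne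
  have hle := h.eventually_le_of_ne_tangentCenter hsh hΔ hs (h.tangentCenter_unit μ t) hso hC
    (Ne.symm hne)
  obtain ⟨u, hlt, hle⟩ := ((h.eventually_lt_of_subset_closure hκ hsh hΔ ht hC hs).and
    (hle.filter_mono nhdsWithin_le_nhds)).exists
  exact hle.not_gt hlt

end IsRegularCurve

end Tangency

section Disk

open Filter Topology

theorem norm3_eq_norm (v : R3) : norm3 v = ‖WithLp.toLp 2 v‖ := by
  rw [norm3, dot3, EuclideanSpace.norm_eq, Fin.sum_univ_three]
  simp [pow_two]

theorem norm3_add_le (x y : R3) : norm3 (x + y) ≤ norm3 x + norm3 y := by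
  simpa only [norm3_eq_norm, WithLp.toLp_add] using norm_add_le _ _

theorem norm3_smul_of_nonneg {c : ℝ} (hc : 0 ≤ c) (x : R3) : norm3 (c • x) = c * norm3 x := by
  rw [norm3_eq_norm, WithLp.toLp_smul, norm_smul, Real.norm_of_nonneg hc, norm3_eq_norm]

theorem norm3_eq_one {x : R3} (hx : dot3 x x = 1) : norm3 x = 1 := by
  rw [norm3, hx, Real.sqrt_one]

theorem continuous_norm3 : Continuous norm3 := by
  unfold norm3; fun_prop

theorem normalize3_unit {v : R3} (hv : v ≠ 0) : dot3 (normalize3 v) (normalize3 v) = 1 := by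
  have := (norm3_pos hv).ne'
  rw [normalize3, smul_dot3, dot3_smul, ← norm3_mul_self]
  field_simp

theorem normalize3_eq_self {v : R3} (hv : dot3 v v = 1) : normalize3 v = v := by
  rw [normalize3, norm3_eq_one hv, inv_one, one_smul]

theorem continuousAt_normalize3 {v : R3} (hv : v ≠ 0) : ContinuousAt normalize3 v :=
  (continuous_norm3.continuousAt.inv₀ (norm3_pos hv).ne').smul continuousAt_id

/-- The open cone over `muDisk μ o`; its convexity yields the topology of the disk. -/
def muCone (μ : ℝ) (o : R3) : Set R3 := {v | μ / Real.sqrt (1 + μ ^ 2) * norm3 v < dot3 v o}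

variable {μ : ℝ} {o : R3}

theorem ne_zero_of_mem_muCone {v : R3} (hv : v ∈ muCone μ o) : v ≠ 0 := by
  rintro rfl
  simp [muCone, norm3, dot3] at hv

theorem convex_muCone (hμ : 0 ≤ μ) (o : R3) : Convex ℝ (muCone μ o) := by
  refine convex_iff_forall_pos.2 fun x hx y hy p q hp hq _ => ?_
  have htri : norm3 (p • x + q • y) ≤ p * norm3 x + q * norm3 y := by
    simpa only [norm3_smul_of_nonneg hp.le, norm3_smul_of_nonneg hq.le] using
      norm3_add_le (p • x) (q • y)
  calc μ / Real.sqrt (1 + μ ^ 2) * norm3 (p • x + q • y)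
      ≤ μ / Real.sqrt (1 + μ ^ 2) * (p * norm3 x + q * norm3 y) := by gcongr
    _ = p * (μ / Real.sqrt (1 + μ ^ 2) * norm3 x) + q * (μ / Real.sqrt (1 + μ ^ 2) * norm3 y) := by
        ring
    _ < p * dot3 x o + q * dot3 y o :=
        add_lt_add (mul_lt_mul_of_pos_left hx hp) (mul_lt_mul_of_pos_left hy hq)
    _ = dot3 (p • x + q • y) o := by rw [add_dot3, smul_dot3, smul_dot3]

theorem normalize3_image_muCone (μ : ℝ) (o : R3) : normalize3 '' muCone μ o = muDisk μ o := by
  ext x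
  constructor
  · rintro ⟨v, hv, rfl⟩
    refine ⟨normalize3_unit (ne_zero_of_mem_muCone hv), ?_⟩
    rwa [normalize3, smul_dot3, inv_mul_eq_div, lt_div_iff₀ (norm3_pos (ne_zero_of_mem_muCone hv))]
  · rintro ⟨hx, hxo⟩
    exact ⟨x, by simpa [muCone, norm3_eq_one hx] using hxo, normalize3_eq_self hx⟩

theorem isPreconnected_muDisk (hμ : 0 ≤ μ) (o : R3) : IsPreconnected (muDisk μ o) := by
  rw [← normalize3_image_muCone]
  exact (convex_muCone hμ o).isPreconnected.image _ fun v hv =>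
    (continuousAt_normalize3 (ne_zero_of_mem_muCone hv)).continuousWithinAt

theorem add_smul_mem_muCone (hμ : 0 ≤ μ) {x : R3} (hx : x ∈ muCircle μ o) (ho : dot3 o o = 1)
    {ε : ℝ} (hε : 0 < ε) : x + ε • o ∈ muCone μ o := by
  have htri : norm3 (x + ε • o) ≤ 1 + ε := by
    simpa only [norm3_smul_of_nonneg hε.le, norm3_eq_one hx.1, norm3_eq_one ho, mul_one] using
      norm3_add_le x (ε • o)
  calc μ / Real.sqrt (1 + μ ^ 2) * norm3 (x + ε • o)
      ≤ μ / Real.sqrt (1 + μ ^ 2) * (1 + ε) := by gcongr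
    _ < μ / Real.sqrt (1 + μ ^ 2) + ε := by nlinarith [div_sqrt_lt_one μ]
    _ = dot3 (x + ε • o) o := by rw [add_dot3, smul_dot3, hx.2, ho, mul_one]

theorem muCircle_subset_closure_muDisk (hμ : 0 ≤ μ) (ho : dot3 o o = 1) :
    muCircle μ o ⊆ closure (muDisk μ o) := by
  intro x hx
  have hx₀ : x ≠ 0 := fun h => by simpa [h, dot3] using hx.1
  have hcone : x ∈ closure (muCone μ o) := by
    have hlim : Tendsto (fun ε : ℝ => x + ε • o) (𝓝[>] 0) (𝓝 x) :=
      (Continuous.tendsto' (by fun_prop) _ _ (by simp)).mono_left nhdsWithin_le_nhds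
    exact mem_closure_of_tendsto hlim
      (eventually_nhdsWithin_of_forall fun ε hε => add_smul_mem_muCone hμ hx ho hε)
  rw [← normalize3_image_muCone, ← normalize3_eq_self hx.1]
  exact (continuousAt_normalize3 hx₀).continuousWithinAt.mem_closure_image hcone

end Disk

section Minimality

open Filter Topology

namespace IsRegularCurve

variable {γ : ℝ → R3} {a b μ : ℝ}

theorem eventually_pushOff_mem_muDisk (h : IsRegularCurve γ) (μ t : ℝ) :
    ∀ᶠ δ in 𝓝[>] (0 : ℝ), pushOff γ t δ ∈ muDisk μ (tangentCenter μ γ t) := by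
  have hderiv := hasDerivAt_const_dot3 (h.hasDerivAt_pushOff t 0 1) (tangentCenter μ γ t)
  rw [zero_smul, zero_add, one_smul, dot3_comm, h.unitNormal_dot3_tangentCenter] at hderiv
  filter_upwards [eventually_lt_of_hasDerivAt hderiv (by positivity)] with δ hδ
  refine ⟨h.pushOff_unit t δ, ?_⟩
  have hbase : pushOff γ t 0 = γ t := by simp [pushOff]
  simp only [zero_mul, add_zero, one_mul, hbase, dot3_comm (tangentCenter μ γ t)] at hδ
  rwa [h.dot3_tangentCenter] at hδ

theorem muCircle_subset_closure (h : IsRegularCurve γ) (hμ : 0 ≤ μ) {Δ : Set R3}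
    (hΔ : IsInteriorDomain γ a b 1 Δ) {t : ℝ} (ht : t ∈ Set.Ioo a b)
    (hout : ∀ s ∈ Set.Icc a b,
      dot3 (γ s) (tangentCenter μ γ t) ≤ μ / Real.sqrt (1 + μ ^ 2)) :
    muCircle μ (tangentCenter μ γ t) ⊆ closure Δ := by
  obtain ⟨⟨q, -, hΔq⟩, hnormal⟩ := hΔ
  obtain ⟨ε, hε, hin⟩ := hnormal t ht
  obtain ⟨δ, hdisk, hδ⟩ := ((h.eventually_pushOff_mem_muDisk μ t).and (Ioo_mem_nhdsGT hε)).exists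
  have hmem := hin δ hδ
  rw [one_mul, h.normalize3_eq_pushOff, hΔq] at hmem
  have hsub : muDisk μ (tangentCenter μ γ t) ⊆ sphere2 \ γ '' Set.Icc a b := by
    rintro x ⟨hx, hxo⟩
    refine ⟨hx, ?_⟩
    rintro ⟨s, hs, rfl⟩
    exact (hout s hs).not_gt hxo
  have hdiskΔ := (isPreconnected_muDisk hμ _).subset_connectedComponentIn hdisk hsub
  rw [← connectedComponentIn_eq hmem, ← hΔq] at hdiskΔ
  exact (muCircle_subset_closure_muDisk hμ (h.tangentCenter_unit μ t)).trans (closure_mono hdiskΔ)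

theorem eventually_dot3_tangentCenter_lt_of_pos (h : IsRegularCurve γ) {t y : ℝ}
    (hκ : ∀ᶠ w in 𝓝 t, kappa γ w < μ) (hpos : 0 < dot3 (γ y) (deriv γ t)) :
    ∀ᶠ z : ℝ × ℝ in 𝓝 (t, y), z.1 < t →
      dot3 (γ z.2) (tangentCenter μ γ z.1) < dot3 (γ z.2) (tangentCenter μ γ t) := by
  have hγ := h.smooth.continuous
  have hγ' := h.contDiff_deriv.continuous
  have ho := h.continuous_tangentCenter μ
  have hnear : ∀ᶠ z : ℝ × ℝ in 𝓝 (t, y), 0 < dot3 (γ z.2) (deriv γ z.1) :=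
    ContinuousAt.eventually_lt continuousAt_const (by fun_prop) hpos
  obtain ⟨ε, hε, hball⟩ := Metric.eventually_nhds_iff_ball.1
    (hnear.and ((continuous_fst.tendsto (t, y)).eventually hκ))
  simp only [← ball_prod_same] at hball
  filter_upwards [Metric.ball_mem_nhds (t, y) hε] with ⟨u, v⟩ hz hut
  rw [← ball_prod_same] at hz
  have hmono : StrictMonoOn (fun w => dot3 (γ v) (tangentCenter μ γ w)) (Metric.ball t ε) := by
    refine strictMonoOn_of_deriv_pos (convex_ball t ε) (by fun_prop) fun w hw => ?_
    obtain ⟨htangent, hκw⟩ := hball (w, v) ⟨interior_subset hw, hz.2⟩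
    rw [(hasDerivAt_const_dot3 (h.hasDerivAt_tangentCenter μ w) _).deriv, dot3_smul]
    exact mul_pos (mul_pos (by positivity) (sub_pos.2 hκw)) htangent
  exact hmono hz.1 (Metric.mem_ball_self hε) hut

/- Otherwise, moving the tangent circle slightly backwards from `t₁` would keep it on the inner
side of the shell. -/
theorem exists_contact_nonpos (h : IsRegularCurve γ) (hμ : 0 < μ)
    (hκ : ∀ s ∈ Set.Icc a b, kappa γ s < μ) (hsh : IsPositiveShell γ a b) {Δ : Set R3}
    (hΔ : IsInteriorDomain γ a b 1 Δ) {t₁ : ℝ} (ht₁ : t₁ ∈ Set.Ioo a b)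
    (hC : muCircle μ (tangentCenter μ γ t₁) ⊆ closure Δ)
    (hmin : ∀ t ∈ Set.Ioo a t₁, ¬muCircle μ (tangentCenter μ γ t) ⊆ closure Δ) :
    ∃ t ∈ Set.Icc a b, t₁ < t ∧
      dot3 (γ t) (tangentCenter μ γ t₁) = μ / Real.sqrt (1 + μ ^ 2) ∧
      dot3 (γ t) (deriv γ t₁) ≤ 0 := by
  by_contra! hcon
  have ht₁' := Set.Ioo_subset_Icc_self ht₁
  have hle := fun s hs => h.dot3_le_of_subset_closure hκ hsh hΔ ht₁' hC (s := s) hs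
  have hγ := h.smooth.continuous
  have ho := h.continuous_tangentCenter μ
  have hlt : ∀ᶠ t in 𝓝 t₁, ∀ s ∈ Set.Icc a b, s ∈ Set.Icc a b → t < t₁ → t ≠ s →
      dot3 (γ s) (tangentCenter μ γ t) < μ / Real.sqrt (1 + μ ^ 2) := by
    refine isCompact_Icc.eventually_forall_of_forall_eventually fun y hy => ?_
    rcases (hle y hy).lt_or_eq with hout | hcontact
    · exact (ContinuousAt.eventually_lt
        (f := fun z : ℝ × ℝ => dot3 (γ z.2) (tangentCenter μ γ z.1))
        (by fun_prop) continuousAt_const hout).mono fun z hz _ _ _ => hz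
    rcases lt_trichotomy y t₁ with hyt | rfl | hyt
    · have hcenter := h.tangentCenter_eq_of_subset_closure hκ hsh hΔ ht₁' hC hy hcontact
      have hy' := h.mem_Ioo_of_subset_closure hμ hsh hΔ hy (h.tangentCenter_unit μ t₁) hcontact hC
      exact absurd (hcenter ▸ hC) (hmin y ⟨hy'.1, hyt⟩)
    · exact (h.eventually_dot3_tangentCenter_lt (hκ y hy)).mono fun z hz _ _ => hz
    · have hκ' : ∀ᶠ w in 𝓝 t₁, kappa γ w < μ := by
        filter_upwards [Icc_mem_nhds ht₁.1 ht₁.2] using hκ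
      refine (h.eventually_dot3_tangentCenter_lt_of_pos hκ' (hcon y hy hyt hcontact)).mono
        fun z hz hz₂ hzt _ => (hz hzt).trans_le (hle z.2 hz₂)
  obtain ⟨t, ht, htI⟩ := ((hlt.filter_mono nhdsWithin_le_nhds).and (Ioo_mem_nhdsLT ht₁.1)).exists
  refine hmin t htI (h.muCircle_subset_closure hμ.le hΔ ⟨htI.1, htI.2.trans ht₁.2⟩ fun s hs => ?_)
  rcases eq_or_ne t s with rfl | hts
  exacts [(h.dot3_tangentCenter μ t).le, (ht s hs hs htI.2 hts).le]

end IsRegularCurve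

end Minimality

section Stereographic

open Complex

theorem dslope_eq_integral {E : Type*} [NormedAddCommGroup E] [NormedSpace ℝ E] [CompleteSpace E]
    {f : ℝ → E} (hf : ContDiff ℝ 1 f) (s t : ℝ) :
    dslope f s t = ∫ r in (0 : ℝ)..1, deriv f (s + r * (t - s)) := by
  rcases eq_or_ne t s with rfl | hst
  · simp
  · rw [dslope_of_ne f hst, slope_def_module, eq_comm, eq_inv_smul_iff₀ (sub_ne_zero.2 hst)]
    have hderiv : ∀ r : ℝ, HasDerivAt (fun r : ℝ => f (s + r * (t - s)))
        ((t - s) • deriv f (s + r * (t - s))) r := fun r =>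
      (hf.differentiable one_ne_zero _).hasDerivAt.scomp r
        (((hasDerivAt_mul_const (t - s)).const_add s))
    have : Continuous (deriv f) := hf.continuous_deriv le_rfl
    rw [← intervalIntegral.integral_smul, intervalIntegral.integral_eq_sub_of_hasDerivAt
      (fun r _ => hderiv r) (Continuous.intervalIntegrable (by fun_prop) _ _)]
    simp

theorem continuous_uncurry_dslope {E : Type*} [NormedAddCommGroup E] [NormedSpace ℝ E]
    [CompleteSpace E] {f : ℝ → E} (hf : ContDiff ℝ 1 f) :
    Continuous fun x : ℝ × ℝ => dslope f x.1 x.2 := by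
  have : Continuous (deriv f) := hf.continuous_deriv le_rfl
  simp only [dslope_eq_integral hf]
  exact intervalIntegral.continuous_parametric_intervalIntegral_of_continuous' (by fun_prop) 0 1

/-- The complex coordinate of `x` in the plane spanned by `u` and `v`. -/
def planarCoord (u v x : R3) : ℂ := ⟨dot3 x u, dot3 x v⟩

/-- The stereographic projection from `w` to the plane spanned by `u` and `v`. -/
def stereoCoord (u v w x : R3) : ℂ := planarCoord u v x / (1 - dot3 x w : ℝ)

/-- The derivative of `stereoCoord u v w` at `x` in the direction `y`, multiplied by
`(1 - ⟨x, w⟩)²` to clear the denominators. -/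
def stereoDeriv (u v w x y : R3) : ℂ :=
  planarCoord u v y * (1 - dot3 x w : ℝ) + planarCoord u v x * dot3 y w

variable {u v w : R3}

theorem planarCoord_sub (u v x y : R3) :
    planarCoord u v (x - y) = planarCoord u v x - planarCoord u v y :=
  Complex.ext (sub_dot3 x y u) (sub_dot3 x y v)

theorem planarCoord_add (u v x y : R3) :
    planarCoord u v (x + y) = planarCoord u v x + planarCoord u v y :=
  Complex.ext (add_dot3 x y u) (add_dot3 x y v)

theorem planarCoord_smul (u v : R3) (c : ℝ) (x : R3) :
    planarCoord u v (c • x) = c * planarCoord u v x :=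
  Complex.ext (by simp [planarCoord, smul_dot3]) (by simp [planarCoord, smul_dot3])

theorem stereoDeriv_smul (u v w x : R3) (c : ℝ) (y : R3) :
    stereoDeriv u v w x (c • y) = c * stereoDeriv u v w x y := by
  rw [stereoDeriv, stereoDeriv, planarCoord_smul, smul_dot3]
  push_cast
  ring

theorem stereoDeriv_sub_self {x y : R3} (hx : dot3 x w ≠ 1) (hy : dot3 y w ≠ 1) :
    stereoDeriv u v w x (y - x) = ((1 - dot3 x w) * (1 - dot3 y w) : ℝ) *
      (stereoCoord u v w y - stereoCoord u v w x) := by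
  have hx' : (1 - dot3 x w : ℂ) ≠ 0 := by exact_mod_cast sub_ne_zero.2 hx.symm
  have hy' : (1 - dot3 y w : ℂ) ≠ 0 := by exact_mod_cast sub_ne_zero.2 hy.symm
  rw [stereoDeriv, stereoCoord, stereoCoord, planarCoord_sub, sub_dot3]
  push_cast
  field_simp
  ring

namespace IsOrientedFrame

theorem rot3_dot3_cross (hF : IsOrientedFrame u v w) (θ : ℝ) (x : R3) :
    dot3 (rot3 w θ x) w = dot3 x w := by
  rw [rot3, add_dot3, add_dot3, smul_dot3, smul_dot3, smul_dot3, dot3_comm (cross3 w x),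
    dot3_cross3_left, hF.unit_cross, dot3_comm w x]
  ring

theorem planarCoord_cross (hF : IsOrientedFrame u v w) : planarCoord u v w = 0 :=
  Complex.ext ((dot3_comm w u).trans hF.left_cross) ((dot3_comm w v).trans hF.right_cross)

theorem planarCoord_cross3 (hF : IsOrientedFrame u v w) (x : R3) :
    planarCoord u v (cross3 w x) = I * planarCoord u v x := by
  have hu : dot3 (cross3 w x) u = -dot3 x v := by
    rw [dot3_comm, ← det3, hF.det3_eq, hF.unit_left, hF.orthogonal, hF.left_cross, dot3_comm w u,
      dot3_comm w v, hF.left_cross, hF.right_cross, hF.unit_cross]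
    ring
  have hv : dot3 (cross3 w x) v = dot3 x u := by
    rw [dot3_comm, ← det3, hF.det3_eq, hF.unit_right, hF.right_cross, dot3_comm v u, hF.orthogonal,
      dot3_comm w u, dot3_comm w v, hF.left_cross, hF.right_cross, hF.unit_cross]
    ring
  exact Complex.ext (by simp [planarCoord, hu]) (by simp [planarCoord, hv])

theorem planarCoord_rot3 (hF : IsOrientedFrame u v w) (θ : ℝ) (x : R3) :
    planarCoord u v (rot3 w θ x) = exp (θ * I) * planarCoord u v x := by
  rw [rot3, planarCoord_add, planarCoord_add, planarCoord_smul, planarCoord_smul, planarCoord_smul,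
    hF.planarCoord_cross, hF.planarCoord_cross3, exp_mul_I, ofReal_cos, ofReal_sin]
  ring

theorem stereoCoord_rot3 (hF : IsOrientedFrame u v w) (θ : ℝ) (x : R3) :
    stereoCoord u v w (rot3 w θ x) = exp (θ * I) * stereoCoord u v w x := by
  rw [stereoCoord, stereoCoord, hF.planarCoord_rot3, hF.rot3_dot3_cross, mul_div_assoc]

theorem ext_planarCoord (hF : IsOrientedFrame u v w) {x y : R3}
    (hplanar : planarCoord u v x = planarCoord u v y) (hw : dot3 x w = dot3 y w) : x = y :=
  hF.ext (congrArg re hplanar) (congrArg im hplanar) hw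

theorem norm_planarCoord_sq (hF : IsOrientedFrame u v w) (x : R3) :
    ‖planarCoord u v x‖ ^ 2 = dot3 x x - dot3 x w ^ 2 := by
  rw [← normSq_eq_norm_sq, normSq_apply, hF.dot3_eq x x, planarCoord]
  ring

theorem exists_rot3_eq (hF : IsOrientedFrame u v w) {x y : R3} (hxy : dot3 x x = dot3 y y)
    (hw : dot3 x w = dot3 y w) (hyu : 0 ≤ dot3 y u) (hyv : dot3 y v = 0) (hxv : dot3 x v ≤ 0) :
    ∃ α ∈ Set.Icc Real.pi (2 * Real.pi), x = rot3 w α y := by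
  have hy : planarCoord u v y = ‖planarCoord u v x‖ := by
    have hnorm : ‖planarCoord u v x‖ = ‖planarCoord u v y‖ := by
      rw [← sq_eq_sq₀ (norm_nonneg _) (norm_nonneg _), hF.norm_planarCoord_sq,
        hF.norm_planarCoord_sq, hxy, hw]
    have hreal : planarCoord u v y = (dot3 y u : ℝ) := Complex.ext rfl hyv
    rw [hnorm, hreal, norm_real, Real.norm_of_nonneg hyu]
  have harg : 0 ≤ arg (-planarCoord u v x) := arg_nonneg_iff.2 (neg_nonneg.2 hxv)
  refine ⟨arg (-planarCoord u v x) + Real.pi,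
    ⟨by linarith, by linarith [arg_le_pi (-planarCoord u v x)]⟩,
    hF.ext_planarCoord ?_ (by rw [hF.rot3_dot3_cross, hw])⟩
  rw [hF.planarCoord_rot3, hy, ofReal_add, add_mul, exp_add, exp_pi_mul_I]
  have hpolar := norm_mul_exp_arg_mul_I (-planarCoord u v x)
  rw [norm_neg] at hpolar
  linear_combination hpolar

theorem norm_stereoCoord_sq (hF : IsOrientedFrame u v w) {x : R3} (hx : dot3 x x = 1)
    (hxw : dot3 x w ≠ 1) : ‖stereoCoord u v w x‖ ^ 2 = 2 / (1 - dot3 x w) - 1 := by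
  have hne := sub_ne_zero.2 hxw.symm
  rw [stereoCoord, norm_div, div_pow, hF.norm_planarCoord_sq, hx, norm_real, Real.norm_eq_abs,
    sq_abs]
  field_simp
  ring

theorem norm_stereoCoord_le (hF : IsOrientedFrame u v w) {x y : R3} (hx : dot3 x x = 1)
    (hy : dot3 y y = 1) (hxy : dot3 x w ≤ dot3 y w) (hyw : dot3 y w < 1) :
    ‖stereoCoord u v w x‖ ≤ ‖stereoCoord u v w y‖ := by
  rw [← sq_le_sq₀ (norm_nonneg _) (norm_nonneg _), hF.norm_stereoCoord_sq hx (hxy.trans_lt hyw).ne,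
    hF.norm_stereoCoord_sq hy hyw.ne]
  have := sub_pos.2 hyw
  gcongr

theorem stereoCoord_injective (hF : IsOrientedFrame u v w) {x y : R3} (hx : dot3 x x = 1)
    (hy : dot3 y y = 1) (hxw : dot3 x w ≠ 1) (hyw : dot3 y w ≠ 1)
    (hxy : stereoCoord u v w x = stereoCoord u v w y) : x = y := by
  have hx' := sub_ne_zero.2 hxw.symm
  have hy' := sub_ne_zero.2 hyw.symm
  have hheight : dot3 x w = dot3 y w := by
    have hnorm := hF.norm_stereoCoord_sq hx hxw
    rw [hxy, hF.norm_stereoCoord_sq hy hyw] at hnorm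
    field_simp at hnorm
    linarith
  refine hF.ext_planarCoord ?_ hheight
  rwa [stereoCoord, stereoCoord, hheight, div_left_inj' (ofReal_ne_zero.2 hy')] at hxy

theorem stereoDeriv_ne_zero (hF : IsOrientedFrame u v w) {x y : R3} (hx : dot3 x x = 1)
    (hxw : dot3 x w ≠ 1) (hxy : dot3 x y = 0) (hy : y ≠ 0) : stereoDeriv u v w x y ≠ 0 := by
  intro hzero
  have hxw' := sub_ne_zero.2 hxw.symm
  have hre := congrArg re hzero
  have him := congrArg im hzero
  simp only [stereoDeriv, planarCoord, add_re, add_im, re_mul_ofReal, im_mul_ofReal, zero_re,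
    zero_im] at hre him
  rw [hF.dot3_eq] at hx hxy
  have hw : dot3 y w = 0 := (mul_eq_zero.1 (by
    linear_combination dot3 x u * hre + dot3 x v * him - (1 - dot3 x w) * hxy - dot3 y w * hx :
    dot3 y w * (1 - dot3 x w) = 0)).resolve_right hxw'
  simp only [hw, mul_zero, add_zero, mul_eq_zero, hxw', or_false] at hre him
  exact hy (hF.ext (hre.trans (zero_dot3 u).symm) (him.trans (zero_dot3 v).symm)
    (hw.trans (zero_dot3 w).symm))

theorem stereoDeriv_cross3 (hF : IsOrientedFrame u v w) {x : R3} (hxw : dot3 x w ≠ 1) :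
    stereoDeriv u v w x (cross3 w x) =
      ((1 - dot3 x w) ^ 2 : ℝ) * (I * stereoCoord u v w x) := by
  have : (1 - dot3 x w : ℂ) ≠ 0 := by exact_mod_cast sub_ne_zero.2 hxw.symm
  rw [stereoDeriv, stereoCoord, hF.planarCoord_cross3, dot3_comm (cross3 w x), dot3_cross3_left]
  push_cast
  field_simp
  ring

end IsOrientedFrame

theorem IsRegularCurve.isSecantField_stereoDeriv {γ : ℝ → R3} (h : IsRegularCurve γ)
    (hF : IsOrientedFrame u v w) {p q : ℝ} (hinj : Set.InjOn γ (Set.Icc p q))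
    (hw : ∀ s ∈ Set.Icc p q, dot3 (γ s) w < 1) :
    IsSecantField (fun x => stereoDeriv u v w (γ x.1) (dslope γ x.1 x.2))
      (fun s => stereoCoord u v w (γ s)) p q := by
  have hsec : ∀ s t, p ≤ s → s < t → t ≤ q → ∃ k : ℝ, 0 < k ∧
      stereoDeriv u v w (γ s) (dslope γ s t) =
        k * (stereoCoord u v w (γ t) - stereoCoord u v w (γ s)) := by
    intro s t hps hst htq
    have hs := hw s ⟨hps, hst.le.trans htq⟩
    have ht := hw t ⟨hps.trans hst.le, htq⟩
    refine ⟨(t - s)⁻¹ * ((1 - dot3 (γ s) w) * (1 - dot3 (γ t) w)),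
      mul_pos (inv_pos.2 (sub_pos.2 hst)) (mul_pos (sub_pos.2 hs) (sub_pos.2 ht)), ?_⟩
    rw [dslope_of_ne γ hst.ne', slope_def_module, stereoDeriv_smul,
      stereoDeriv_sub_self hs.ne ht.ne, ← mul_assoc, ← ofReal_mul]
  refine ⟨fun s t hps hst htq => ?_, hsec⟩
  have hsI : s ∈ Set.Icc p q := ⟨hps, hst.trans htq⟩
  have htI : t ∈ Set.Icc p q := ⟨hps.trans hst, htq⟩
  rcases hst.eq_or_lt with rfl | hlt
  · rw [dslope_same]
    exact hF.stereoDeriv_ne_zero (h.sphere s) (hw s hsI).ne (h.dot3_deriv s) (h.reg s)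
  · obtain ⟨k, hk, heq⟩ := hsec s t hps hlt htq
    rw [heq]
    refine mul_ne_zero (ofReal_ne_zero.2 hk.ne') (sub_ne_zero.2 fun hst' => ?_)
    exact hlt.ne' (hinj htI hsI (hF.stereoCoord_injective (h.sphere t) (h.sphere s)
      (hw t htI).ne (hw s hsI).ne hst'))

theorem continuous_stereoDeriv_dslope {γ : ℝ → R3} (hγ : ContDiff ℝ 1 γ) (u v w : R3) :
    Continuous fun x : ℝ × ℝ => stereoDeriv u v w (γ x.1) (dslope γ x.1 x.2) := by
  have hcont := hγ.continuous
  have hslope := continuous_uncurry_dslope hγ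
  have hplanar : Continuous (planarCoord u v) := by
    have heq : planarCoord u v = fun x => (dot3 x u + dot3 x v * I : ℂ) :=
      funext fun x => mk_eq_add_mul_I _ _
    rw [heq]
    fun_prop
  unfold stereoDeriv
  fun_prop

/- Stereographic projection from `w` carries the complement of the open disk around `w` to a closed
round disc, where `IsSecantField.tangent_cyclic_order` applies to the projected arc. -/
theorem IsRegularCurve.tangent_cyclic_order {γ : ℝ → R3} (h : IsRegularCurve γ)
    (hF : IsOrientedFrame u v w) {p m q α β : ℝ} (hpm : p < m) (hmq : m < q)
    (hinj : Set.InjOn γ (Set.Icc p q)) (hu : 0 < dot3 (γ p) u) (hv : dot3 (γ p) v = 0)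
    (hle : ∀ s ∈ Set.Icc p q, dot3 (γ s) w ≤ dot3 (γ p) w)
    (htan : ∀ s ∈ Set.Icc p q, dot3 (γ s) w = dot3 (γ p) w →
      ∃ k : ℝ, 0 < k ∧ deriv γ s = k • cross3 w (γ s))
    (hm : γ m = rot3 w α (γ p)) (hq : γ q = rot3 w β (γ p))
    (hβ : 0 < β) (hα : α < 2 * Real.pi) : α ≤ β := by
  have hc : dot3 (γ p) w < 1 := by
    have hunit := hF.dot3_eq (γ p) (γ p)
    rw [h.sphere] at hunit
    nlinarith
  have hw : ∀ s ∈ Set.Icc p q, dot3 (γ s) w < 1 := fun s hs => (hle s hs).trans_lt hc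
  have hpI : p ∈ Set.Icc p q := ⟨le_rfl, (hpm.trans hmq).le⟩
  have hmI : m ∈ Set.Icc p q := ⟨hpm.le, hmq.le⟩
  have hqI : q ∈ Set.Icc p q := ⟨(hpm.trans hmq).le, le_rfl⟩
  have hcontact : ∀ s ∈ Set.Icc p q, dot3 (γ s) w = dot3 (γ p) w →
      ∃ k : ℝ, 0 < k ∧ stereoDeriv u v w (γ s) (dslope γ s s) =
        k * (I * stereoCoord u v w (γ s)) := by
    intro s hs hsp
    obtain ⟨k, hk, hderiv⟩ := htan s hs hsp
    have := sub_pos.2 (hw s hs)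
    refine ⟨k * (1 - dot3 (γ s) w) ^ 2, by positivity, ?_⟩
    rw [dslope_same, hderiv, stereoDeriv_smul, hF.stereoDeriv_cross3 (hw s hs).ne,
      ← mul_assoc, ← ofReal_mul]
  set R := dot3 (γ p) u / (1 - dot3 (γ p) w) with hR
  have hzp : stereoCoord u v w (γ p) = R := by
    rw [stereoCoord, hR, ofReal_div]
    congr 1
    exact Complex.ext rfl hv
  have hRpos : 0 < R := div_pos hu (sub_pos.2 hc)
  have hrot : ∀ {s φ}, γ s = rot3 w φ (γ p) →
      dot3 (γ s) w = dot3 (γ p) w ∧ stereoCoord u v w (γ s) = R * exp (φ * I) := by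
    intro s φ hs
    rw [hs, hF.stereoCoord_rot3, hF.rot3_dot3_cross, hzp, mul_comm]
    exact ⟨rfl, rfl⟩
  refine (h.isSecantField_stereoDeriv hF hinj hw).tangent_cyclic_order hpm hmq hRpos
    (continuous_stereoDeriv_dslope (h.smooth.of_le (by exact_mod_cast le_top)) u v w)
    (fun t ht => ?_) (hcontact p hpI rfl) (hcontact m hmI (hrot hm).1) (hcontact q hqI (hrot hq).1)
    hzp (hrot hm).2 (hrot hq).2 hβ hα
  have hnorm := hF.norm_stereoCoord_le (h.sphere t) (h.sphere p) (hle t ht) hc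
  rwa [hzp, norm_real, Real.norm_of_nonneg hRpos.le] at hnorm

end Stereographic

section Contact

variable {γ : ℝ → R3} {a b μ : ℝ}

theorem IsShell.injOn_Icc (hsh : IsShell γ a b) {t q : ℝ} (ht : a < t) (hq : q ≤ b) :
    Set.InjOn γ (Set.Icc t q) := by
  intro s hs u hu hsu
  by_contra hne
  rcases hsh.eq_endpoints ⟨ht.le.trans hs.1, hs.2.trans hq⟩ ⟨ht.le.trans hu.1, hu.2.trans hq⟩
    hsu hne with ⟨rfl, -⟩ | ⟨-, rfl⟩
  exacts [ht.not_ge hs.1, ht.not_ge hu.1]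

theorem rot3_zero (o x : R3) : rot3 o 0 x = x := by
  simp [rot3]

theorem rot3_two_pi (o x : R3) : rot3 o (2 * Real.pi) x = x := by
  simp [rot3]

namespace IsRegularCurve

theorem circleFrame (h : IsRegularCurve γ) (μ t : ℝ) :
    IsOrientedFrame (cross3 (unitTangent γ t) (tangentCenter μ γ t)) (unitTangent γ t)
      (tangentCenter μ γ t) :=
  .of_orthonormal (h.frame t).unit_right (h.tangentCenter_unit μ t)
    (h.unitTangent_dot3_tangentCenter μ t)

theorem dot3_cross3_tangentCenter (h : IsRegularCurve γ) (μ t : ℝ) :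
    dot3 (γ t) (cross3 (unitTangent γ t) (tangentCenter μ γ t)) = (Real.sqrt (1 + μ ^ 2))⁻¹ := by
  rw [← det3, det3_eq_dot3_cross3, ← unitNormal_eq_cross3, dot3_comm,
    h.unitNormal_dot3_tangentCenter]

theorem deriv_eq_smul_cross3_tangentCenter (h : IsRegularCurve γ) (μ t : ℝ) :
    deriv γ t = (norm3 (deriv γ t) * Real.sqrt (1 + μ ^ 2)) •
      cross3 (tangentCenter μ γ t) (γ t) := by
  have hσ : Real.sqrt (1 + μ ^ 2) ≠ 0 := by positivity
  have hcross : cross3 (tangentCenter μ γ t) (γ t) =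
      (Real.sqrt (1 + μ ^ 2))⁻¹ • unitTangent γ t := by
    conv_lhs => rw [← (h.circleFrame μ t).cross]
    rw [cross3_cross3, dot3_comm _ (γ t), h.dot3_cross3_tangentCenter, dot3_comm,
      (h.frame t).orthogonal, zero_smul, sub_zero]
  rw [hcross, smul_smul, mul_inv_cancel_right₀ hσ, ← h.deriv_eq_smul_unitTangent]

theorem exists_rot3_tangentCenter_eq (h : IsRegularCurve γ) {t m : ℝ}
    (hm : dot3 (γ m) (tangentCenter μ γ t) = μ / Real.sqrt (1 + μ ^ 2))
    (hmt : dot3 (γ m) (deriv γ t) ≤ 0) :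
    ∃ α ∈ Set.Icc Real.pi (2 * Real.pi), γ m = rot3 (tangentCenter μ γ t) α (γ t) := by
  refine (h.circleFrame μ t).exists_rot3_eq ((h.sphere m).trans (h.sphere t).symm)
    (hm.trans (h.dot3_tangentCenter μ t).symm) ?_ (h.frame t).orthogonal ?_
  · rw [h.dot3_cross3_tangentCenter]
    positivity
  · rw [unitTangent, dot3_smul]
    exact mul_nonpos_of_nonneg_of_nonpos (inv_nonneg.2 (h.speed_pos t).le) hmt

theorem rot3_tangentCenter_dot3_unitTangent (h : IsRegularCurve γ) (μ t θ : ℝ) :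
    dot3 (rot3 (tangentCenter μ γ t) θ (γ t)) (unitTangent γ t) =
      (Real.sqrt (1 + μ ^ 2))⁻¹ * Real.sin θ := by
  have him := congrArg Complex.im ((h.circleFrame μ t).planarCoord_rot3 θ (γ t))
  have hexp : Complex.exp (θ * Complex.I) = (⟨Real.cos θ, Real.sin θ⟩ : ℂ) := by
    rw [Complex.exp_mul_I, Complex.mk_eq_add_mul_I, Complex.ofReal_cos, Complex.ofReal_sin]
  rw [hexp, Complex.mul_im] at him
  simpa only [planarCoord, h.dot3_cross3_tangentCenter, (h.frame t).orthogonal, zero_mul, mul_zero,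
    zero_add, mul_comm] using him

theorem pi_le_angle_of_contact (h : IsRegularCurve γ)
    (hκ : ∀ s ∈ Set.Icc a b, kappa γ s < μ) (hsh : IsPositiveShell γ a b) {Δ : Set R3}
    (hΔ : IsInteriorDomain γ a b 1 Δ) {t : ℝ} (ht : t ∈ Set.Ioo a b)
    (hC : muCircle μ (tangentCenter μ γ t) ⊆ closure Δ) {m q θ : ℝ} (htm : t < m) (hmq : m ≤ q)
    (hq : q ∈ Set.Icc a b) (hm : dot3 (γ m) (tangentCenter μ γ t) = μ / Real.sqrt (1 + μ ^ 2))
    (hmt : dot3 (γ m) (deriv γ t) ≤ 0) (hθ : 0 ≤ θ)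
    (hrot : rot3 (tangentCenter μ γ t) θ (γ t) = γ q) : Real.pi ≤ θ := by
  have htI := Set.Ioo_subset_Icc_self ht
  have htq : ∀ s ∈ Set.Icc t q, s ∈ Set.Icc a b :=
    fun s hs => ⟨ht.1.le.trans hs.1, hs.2.trans hq.2⟩
  have hne : ∀ s ∈ Set.Ioc t q, γ s ≠ γ t := fun s hs =>
    hsh.1.ne_of_mem_Ioo ht (htq s ⟨hs.1.le, hs.2⟩) hs.1.ne'
  have hθ : 0 < θ := by
    refine hθ.lt_of_ne ?_
    rintro rfl
    exact hne q ⟨htm.trans_le hmq, le_rfl⟩ (hrot.symm.trans (rot3_zero _ _))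
  obtain ⟨α, hα, hmα⟩ := h.exists_rot3_tangentCenter_eq hm hmt
  have hα' : α < 2 * Real.pi := by
    refine hα.2.lt_of_ne ?_
    rintro rfl
    exact hne m ⟨htm, hmq⟩ (hmα.trans (rot3_two_pi _ _))
  rcases hmq.eq_or_lt with rfl | hmq
  · by_contra! hθπ
    have hsin := Real.sin_pos_of_pos_of_lt_pi hθ hθπ
    rw [← hrot, h.deriv_eq_smul_unitTangent, dot3_smul,
      h.rot3_tangentCenter_dot3_unitTangent] at hmt
    have := h.speed_pos t
    exact hmt.not_gt (by positivity)
  have hheight := h.dot3_tangentCenter μ t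
  refine hα.1.trans (h.tangent_cyclic_order (h.circleFrame μ t) htm hmq
    (hsh.1.injOn_Icc ht.1 hq.2) ?_ (h.frame t).orthogonal (fun s hs => ?_) (fun s hs hst => ?_)
    hmα hrot.symm hθ hα')
  · rw [h.dot3_cross3_tangentCenter]
    positivity
  · rw [hheight]
    exact h.dot3_le_of_subset_closure hκ hsh hΔ htI hC (htq s hs)
  · rw [← h.tangentCenter_eq_of_subset_closure hκ hsh hΔ htI hC (htq s hs) (hst.trans hheight)]
    exact ⟨_, mul_pos (h.speed_pos s) (by positivity), h.deriv_eq_smul_cross3_tangentCenter μ s⟩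

theorem isCompact_contacts (h : IsRegularCurve γ) (o : R3) :
    IsCompact {t | t ∈ Set.Icc a b ∧ γ t ∈ muCircle μ o} := by
  have hγ := h.smooth.continuous
  have hclosed : IsClosed (γ ⁻¹' muCircle μ o) := by
    have hcircle : IsClosed (muCircle μ o) :=
      (isClosed_eq (by fun_prop) continuous_const).inter
        (isClosed_eq (by fun_prop) continuous_const)
    exact hcircle.preimage hγ
  exact isCompact_Icc.inter_right hclosed

end IsRegularCurve

end Contact

theorem stmt8_general (μ : ℝ) (γ2 : ℝ → R3) (a2 b2 t1 t2 : ℝ) (Δ : Set R3)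
    (hμ : 0 < μ) (hreg : IsRegularCurve γ2) (hκ : ∀ s ∈ Set.Icc a2 b2, kappa γ2 s < μ)
    (hshell : IsPositiveShell γ2 a2 b2) (hΔ : IsInteriorDomain γ2 a2 b2 1 Δ)
    (ht1 : t1 ∈ Set.Ioo a2 b2)
    (hC : muCircle μ (tangentCenter μ γ2 t1) ⊆ closure Δ)
    (hmin : ∀ t ∈ Set.Ioo a2 t1, ¬muCircle μ (tangentCenter μ γ2 t) ⊆ closure Δ)
    (ht2 : t2 = sSup {t | t ∈ Set.Icc a2 b2 ∧ γ2 t ∈ muCircle μ (tangentCenter μ γ2 t1)}) (θ : ℝ)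
    (hθ : 0 ≤ θ) (hrot : rot3 (tangentCenter μ γ2 t1) θ (γ2 t1) = γ2 t2) : Real.pi ≤ θ := by
  obtain ⟨m, hm, ht1m, hcontact, htangent⟩ :=
    hreg.exists_contact_nonpos hμ hκ hshell hΔ ht1 hC hmin
  have hcompact := hreg.isCompact_contacts (a := a2) (b := b2) (μ := μ) (tangentCenter μ γ2 t1)
  have hmS : m ∈ {t | t ∈ Set.Icc a2 b2 ∧ γ2 t ∈ muCircle μ (tangentCenter μ γ2 t1)} :=
    ⟨hm, hreg.sphere m, hcontact⟩
  have hmt2 : m ≤ t2 := ht2 ▸ le_csSup hcompact.bddAbove hmS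
  have ht2I : t2 ∈ Set.Icc a2 b2 := ht2 ▸ (hcompact.sSup_mem ⟨m, hmS⟩).1
  exact hreg.pi_le_angle_of_contact hκ hshell hΔ ht1 hC ht1m hmt2 ht2I hcontact htangent hθ hrot

theorem stmt8 (μ : ℝ) (γ2 : ℝ → R3) (l a2 b2 t1 t2 : ℝ) (Δ : Set R3)
    (hμ : 0 < μ) (hreg : IsRegularCurve γ2) (hper : HasPeriod γ2 l)
    (hκ : ∀ s, kappa γ2 s < μ) (hint : b2 - a2 < l)
    (hshell : IsPositiveShell γ2 a2 b2)
    (hΔ : IsInteriorDomain γ2 a2 b2 1 Δ)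
    (ht1 : t1 ∈ Set.Ioo a2 b2)
    (hC : muCircle μ (tangentCenter μ γ2 t1) ⊆ closure Δ)
    (hmin : ∀ t ∈ Set.Ioo a2 t1, ¬muCircle μ (tangentCenter μ γ2 t) ⊆ closure Δ)
    (ht2 : t2 = sSup {t | t ∈ Set.Icc a2 b2 ∧ γ2 t ∈ muCircle μ (tangentCenter μ γ2 t1)}) :
    ∀ θ ∈ Set.Ico (0 : ℝ) (2 * Real.pi),
      rot3 (tangentCenter μ γ2 t1) θ (γ2 t1) = γ2 t2 → Real.pi ≤ θ :=
  fun θ hθ => stmt8_general μ γ2 a2 b2 t1 t2 Δ hμ hreg (fun s _ => hκ s) hshell hΔ ht1 hC hmin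
    ht2 θ hθ.1
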